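/- arXiv:2108.04102 — 2 statements merged into one kernel-verified Lean document; each statement's English description precedes it below -/
import Mathlib

section
/- Tail bound for k-wise ε-approximately independent random variables: Let n ≥ 1 be an integer, k ≥ 4 an even integer, ε ≥ 0 a real and p ∈ [0,1]. Suppose X_1,…,X_n are {0,1}-valued random variables with identical marginal distributions that are k-wise ε-approximately independent for the product distribution D(n,p). Let X = X_1 + … + X_n and μ = E[X]. Then for every real t > 0, Pr[|X − μ| ≥ t] ≤ 8·((k·μ + k²)/t²)^{k/2} + ε·(n/t)^k. -/
open MeasureTheory

/-- `X_1, …, X_n` (0-1 valued random variables) are `k`-wise `ε`-approximately independent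
for the product distribution `D(n,p)`: for every `t ≤ k`, all distinct indices
`i_1, …, i_t` and all bits `b_1, …, b_t ∈ {0,1}`,
`|Pr[X_{i_j} = b_j, 1 ≤ j ≤ t] − ∏_j p^{b_j}(1-p)^{1-b_j}| ≤ ε`. -/
def KWiseApproxIndep {Ω : Type*} [MeasureSpace Ω] (n : ℕ) (X : Fin n → Ω → ℝ)
    (k : ℕ) (ε p : ℝ) : Prop :=
  ∀ t : ℕ, t ≤ k → ∀ idx : Fin t → Fin n, Function.Injective idx →
    ∀ b : Fin t → Bool,
      |(volume {ω | ∀ j, X (idx j) ω = (if b j then 1 else 0)}).toReal -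
        ∏ j, (if b j then p else 1 - p)| ≤ ε

/-
Let `q` be the common mean of the `X i` and `v = q (1 - q)` their variance, so that `μ = n q`. By
Markov's inequality it suffices to bound `E (∑ (X i - q)) ^ k`. After expanding into monomials, the
point is that every `E ∏ i ∈ S, (X i - q) ^ f i` is at most `ε + ∏ i ∈ S, b (f i)` with
`b = 1, 0, v, v, …`, so that all errors together cost `ε n ^ k`:
* if `ε ≥ v`, then since the monomial has degree at least two, its expectation is at most `v ≤ ε`;
* if `ε ≤ v` and some exponent is at least two, the expectation is compared with the product
  distribution, the error being `ε` times the sum of the absolute values of the monomial over the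
  points of `{0,1}^S`; that sum is sufficiently below `1` to make up for the parameter `p` being
  only within `ε` of `q`;
* if all exponents are one, that comparison loses too much, and `E (X a - q) = 0` is used for one
  index `a` to remove the contribution of `p - q`.
The sum of the products `∏ b (f i)` with multinomial weights is `k!` times a coefficient of
`(1 + v (e ^ x - 1 - x)) ^ n`, which is bounded by its value at `x ^ 2 = k / (2 (μ + k))` divided by
`x ^ k`, and Stirling's bound for `k!` gives the constant `8`.
-/

section RealInequalities

variable {ι : Type*}

lemma factorial_mul_exp_pow_le {n : ℕ} (hn : 1 ≤ n) :
    (n.factorial : ℝ) * Real.exp 1 ^ n ≤ Real.exp 1 * (n : ℝ) ^ (n + 1) := by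
  induction n, hn using Nat.le_induction with
  | base => simp
  | succ n hn ih =>
    have hn0 : (0 : ℝ) < n := by exact_mod_cast hn
    have hratio : Real.exp 1 * (n : ℝ) ^ (n + 1) ≤ ((n + 1 : ℕ) : ℝ) ^ (n + 1) := by
      have h := Real.one_sub_div_pow_le_exp_neg (n := n + 1) (t := 1) (by push_cast; linarith)
      have hfrac : 1 - 1 / ((n + 1 : ℕ) : ℝ) = n / ((n + 1 : ℕ) : ℝ) := by
        push_cast
        field_simp
        ring
      rw [hfrac, div_pow, div_le_iff₀ (by positivity), Real.exp_neg] at h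
      rwa [← le_inv_mul_iff₀ (Real.exp_pos 1)]
    calc ((n + 1).factorial : ℝ) * Real.exp 1 ^ (n + 1)
        = (n + 1 : ℕ) * Real.exp 1 * (n.factorial * Real.exp 1 ^ n) := by
          rw [Nat.factorial_succ]
          push_cast
          ring
      _ ≤ (n + 1 : ℕ) * Real.exp 1 * ((n + 1 : ℕ) : ℝ) ^ (n + 1) := by
          gcongr
          exact ih.trans hratio
      _ = Real.exp 1 * ((n + 1 : ℕ) : ℝ) ^ (n + 1 + 1) := by ring

lemma mul_two_pow_mul_exp_one_le (m : ℕ) :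
    (m : ℝ) * 2 ^ m * Real.exp 1 ≤ 4 * Real.exp 1 ^ m := by
  have hexp : (m : ℝ) * (1 - Real.log 2) ≤ Real.exp (m * (1 - Real.log 2) - 1) := by
    linarith [Real.add_one_le_exp (m * (1 - Real.log 2) - 1)]
  have hm : (m : ℝ) ≤ 4 * Real.exp (m * (1 - Real.log 2) - 1) := by
    nlinarith [Real.log_two_lt_d9, (m.cast_nonneg : (0 : ℝ) ≤ m)]
  have hsplit : Real.exp (m * (1 - Real.log 2) - 1) * (2 ^ m * Real.exp 1) = Real.exp 1 ^ m := by
    have htwo : (2 : ℝ) ^ m = Real.exp (m * Real.log 2) := by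
      rw [Real.exp_nat_mul, Real.exp_log two_pos]
    rw [htwo, ← Real.exp_add, ← Real.exp_add, ← Real.exp_nat_mul]
    ring_nf
  calc (m : ℝ) * 2 ^ m * Real.exp 1
      = m * (2 ^ m * Real.exp 1) := by ring
    _ ≤ 4 * Real.exp (m * (1 - Real.log 2) - 1) * (2 ^ m * Real.exp 1) := by gcongr
    _ = 4 * Real.exp 1 ^ m := by rw [mul_assoc, hsplit]

lemma factorial_two_mul_mul_exp_pow_le {m : ℕ} (hm : m ≠ 0) :
    ((2 * m).factorial : ℝ) * (2 * Real.exp 1) ^ m ≤ 8 * ((2 * m : ℕ) : ℝ) ^ (2 * m) := by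
  refine le_of_mul_le_mul_right ?_ (pow_pos (Real.exp_pos 1) m)
  calc ((2 * m).factorial : ℝ) * (2 * Real.exp 1) ^ m * Real.exp 1 ^ m
      = 2 ^ m * ((2 * m).factorial * Real.exp 1 ^ (2 * m)) := by
        rw [mul_pow, two_mul m, pow_add]
        ring
    _ ≤ 2 ^ m * (Real.exp 1 * ((2 * m : ℕ) : ℝ) ^ (2 * m + 1)) :=
        mul_le_mul_of_nonneg_left (factorial_mul_exp_pow_le (by omega)) (by positivity)
    _ = 2 * (m * 2 ^ m * Real.exp 1) * ((2 * m : ℕ) : ℝ) ^ (2 * m) := by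
        rw [pow_succ]
        push_cast
        ring
    _ ≤ 2 * (4 * Real.exp 1 ^ m) * ((2 * m : ℕ) : ℝ) ^ (2 * m) := by
        gcongr ?_ * _
        exact mul_le_mul_of_nonneg_left (mul_two_pow_mul_exp_one_le m) two_pos.le
    _ = 8 * ((2 * m : ℕ) : ℝ) ^ (2 * m) * Real.exp 1 ^ m := by ring

-- Up to the factor `k! / x ^ k`, the left side is the degree-`k` part of the product of the
-- exponential generating functions of the `a i`.
lemma sum_multinomial_mul_prod_le [Fintype ι] [DecidableEq ι] {a : ι → ℕ → ℝ} {A : ι → ℝ} {x : ℝ}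
    (ha : ∀ i j, 0 ≤ a i j) (hx : 0 < x)
    (hA : ∀ i, HasSum (fun j => a i j * (x ^ j / j.factorial)) (A i)) (k : ℕ) :
    ∑ f ∈ Finset.univ.piAntidiag k, (Nat.multinomial Finset.univ f : ℝ) * ∏ i, a i (f i) ≤
      k.factorial / x ^ k * ∏ i, A i := by
  have hnonneg : ∀ i j, 0 ≤ a i j * (x ^ j / j.factorial) := fun i j =>
    mul_nonneg (ha i j) (by positivity)
  have hterm : ∀ f ∈ (Finset.univ : Finset ι).piAntidiag k,
      (Nat.multinomial Finset.univ f : ℝ) * ∏ i, a i (f i) =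
        k.factorial / x ^ k * ∏ i, a i (f i) * (x ^ f i / (f i).factorial) := by
    intro f hf
    have hsum : ∑ i, f i = k := (Finset.mem_piAntidiag.1 hf).1
    have hfact : (∏ i, ((f i).factorial : ℝ)) ≠ 0 :=
      Finset.prod_ne_zero_iff.2 fun i _ => by positivity
    rw [Finset.prod_mul_distrib, Finset.prod_div_distrib, Finset.prod_pow_eq_pow_sum, hsum,
      ← hsum, ← Nat.multinomial_spec Finset.univ f]
    push_cast
    field_simp
  have hsubset : (Finset.univ : Finset ι).piAntidiag k ⊆
      Fintype.piFinset fun _ => Finset.range (k + 1) := by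
    intro f hf
    rw [Fintype.mem_piFinset]
    intro i
    rw [Finset.mem_range_succ_iff, ← (Finset.mem_piAntidiag.1 hf).1]
    exact Finset.single_le_sum (fun i _ => Nat.zero_le (f i)) (Finset.mem_univ i)
  rw [Finset.sum_congr rfl hterm, ← Finset.mul_sum]
  gcongr
  calc ∑ f ∈ Finset.univ.piAntidiag k, ∏ i, a i (f i) * (x ^ f i / (f i).factorial)
      ≤ ∑ f ∈ Fintype.piFinset fun _ => Finset.range (k + 1),
          ∏ i, a i (f i) * (x ^ f i / (f i).factorial) :=
        Finset.sum_le_sum_of_subset_of_nonneg hsubset fun f _ _ =>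
          Finset.prod_nonneg fun i _ => hnonneg i (f i)
    _ = ∏ i, ∑ j ∈ Finset.range (k + 1), a i j * (x ^ j / j.factorial) := by
        rw [Finset.prod_univ_sum]
    _ ≤ ∏ i, A i :=
        Finset.prod_le_prod (fun i _ => Finset.sum_nonneg fun j _ => hnonneg i j) fun i _ =>
          sum_le_hasSum _ (fun j _ => hnonneg i j) (hA i)

lemma prod_add_sub_prod_insert_le [DecidableEq ι] {U : Finset ι} (hU : U.Nonempty) {a : ι}
    (ha : a ∉ U) {g : ι → ℝ} {ε : ℝ} (hε0 : 0 ≤ ε) (hε1 : ε ≤ 1 / 4)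
    (hg0 : ∀ i ∈ insert a U, 0 ≤ g i) (hg1 : ∀ i ∈ insert a U, g i ≤ 1 / 4) :
    ∏ i ∈ insert a U, (ε + g i) - ∏ i ∈ insert a U, g i ≤
      ∏ i ∈ U, (ε + g i) - ∏ i ∈ U, g i := by
  rw [Finset.forall_mem_insert] at hg0 hg1
  have hgU0 := hg0.2
  obtain ⟨hga1, hgU1⟩ := hg1
  have hprod : 0 ≤ ∏ i ∈ U, g i := Finset.prod_nonneg hgU0
  have hgrowth : (1 + 4 * ε) * ∏ i ∈ U, g i ≤ ∏ i ∈ U, (ε + g i) :=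
    calc (1 + 4 * ε) * ∏ i ∈ U, g i
        ≤ (1 + 4 * ε) ^ U.card * ∏ i ∈ U, g i :=
          mul_le_mul_of_nonneg_right (le_self_pow₀ (by linarith) hU.card_ne_zero) hprod
      _ = ∏ i ∈ U, (1 + 4 * ε) * g i := by rw [Finset.prod_mul_distrib, Finset.prod_const]
      _ ≤ ∏ i ∈ U, (ε + g i) :=
          Finset.prod_le_prod (fun i hi => mul_nonneg (by linarith) (hgU0 i hi)) fun i hi => by
            nlinarith [hgU1 i hi]
  have hrest : (1 - g a) * ∏ i ∈ U, g i ≤ (1 - ε - g a) * ∏ i ∈ U, (ε + g i) :=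
    calc (1 - g a) * ∏ i ∈ U, g i
        ≤ (1 - ε - g a) * (1 + 4 * ε) * ∏ i ∈ U, g i :=
          mul_le_mul_of_nonneg_right (by nlinarith) hprod
      _ = (1 - ε - g a) * ((1 + 4 * ε) * ∏ i ∈ U, g i) := mul_assoc _ _ _
      _ ≤ (1 - ε - g a) * ∏ i ∈ U, (ε + g i) :=
          mul_le_mul_of_nonneg_left hgrowth (by linarith)
  rw [Finset.prod_insert ha, Finset.prod_insert ha]
  linarith

lemma prod_add_sub_prod_le_of_subset {U S : Finset ι} (hU : U.Nonempty) (hUS : U ⊆ S)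
    {g : ι → ℝ} {ε : ℝ} (hε0 : 0 ≤ ε) (hε1 : ε ≤ 1 / 4) (hg0 : ∀ i ∈ S, 0 ≤ g i)
    (hg1 : ∀ i ∈ S, g i ≤ 1 / 4) :
    ∏ i ∈ S, (ε + g i) - ∏ i ∈ S, g i ≤ ∏ i ∈ U, (ε + g i) - ∏ i ∈ U, g i := by
  classical
  obtain ⟨R, rfl⟩ : ∃ R, S = U ∪ R := ⟨S, (Finset.union_eq_right.2 hUS).symm⟩
  clear hUS
  induction R using Finset.induction_on with
  | empty => simp
  | insert a R _ ih =>
    rw [Finset.union_insert] at hg0 hg1 ⊢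
    have hsubset := Finset.subset_insert a (U ∪ R)
    have ih := ih (fun i hi => hg0 i (hsubset hi)) fun i hi => hg1 i (hsubset hi)
    by_cases ha : a ∈ U ∪ R
    · rwa [Finset.insert_eq_of_mem ha]
    · exact (prod_add_sub_prod_insert_le (hU.mono Finset.subset_union_left) ha hε0 hε1
        hg0 hg1).trans ih

lemma prod_add_add_mul_prod_le {S : Finset ι} {a b : ι} (ha : a ∈ S) (hb : b ∈ S) (hab : a ≠ b)
    {g : ι → ℝ} {ε : ℝ} (hε0 : 0 ≤ ε) (hεa : ε ≤ g a) (hg0 : ∀ i ∈ S, 0 ≤ g i)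
    (hg1 : ∀ i ∈ S, g i ≤ 1 / 4) :
    ∏ i ∈ S, (ε + g i) + ε * ∏ i ∈ S, (1 - 2 * g i) ≤ ε + ∏ i ∈ S, g i := by
  classical
  have hpair : {a, b} ⊆ S := Finset.insert_subset ha (Finset.singleton_subset_iff.2 hb)
  have hgap := prod_add_sub_prod_le_of_subset (Finset.insert_nonempty a {b}) hpair hε0
    (hεa.trans (hg1 a ha)) hg0 hg1
  have herr : ∏ i ∈ S, (1 - 2 * g i) ≤ ∏ i ∈ {a, b}, (1 - 2 * g i) :=
    Finset.prod_le_prod_of_subset_of_le_one hpair (fun i hi => by linarith [hg1 i hi])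
      fun i hi _ => by linarith [hg0 i hi]
  rw [Finset.prod_pair hab, Finset.prod_pair hab] at hgap
  rw [Finset.prod_pair hab] at herr
  have hslack : 0 ≤ ε * (g a - ε + g b * (1 - 4 * g a)) :=
    mul_nonneg hε0 (add_nonneg (sub_nonneg.2 hεa)
      (mul_nonneg (hg0 b hb) (by linarith [hg1 a ha])))
  nlinarith [mul_le_mul_of_nonneg_left herr hε0]

end RealInequalities

/-- The sequence `1, 0, v, v, …`, which dominates the absolute central moments of a `{0,1}`-valued
random variable of variance `v`. -/
def bernoulliMomentBound (v : ℝ) : ℕ → ℝ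
  | 0 => 1
  | 1 => 0
  | _ + 2 => v

section BernoulliMoments

variable {q v : ℝ}

lemma bernoulliMomentBound_nonneg (hv : 0 ≤ v) : ∀ j, 0 ≤ bernoulliMomentBound v j
  | 0 => zero_le_one
  | 1 => le_rfl
  | _ + 2 => hv

lemma bernoulliMomentBound_of_two_le : ∀ {j : ℕ}, 2 ≤ j → bernoulliMomentBound v j = v
  | _ + 2, _ => rfl

lemma bernoulliMomentBound_le (hv : 0 ≤ v) : ∀ {j : ℕ}, 1 ≤ j → bernoulliMomentBound v j ≤ v
  | 1, _ => hv
  | _ + 2, _ => le_rfl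

lemma pow_one_sub_add_pow_le_one (hq0 : 0 ≤ q) (hq1 : q ≤ 1) {j : ℕ} (hj : 1 ≤ j) :
    (1 - q) ^ j + q ^ j ≤ 1 := by
  have hone := pow_le_of_le_one (sub_nonneg.2 hq1) (by linarith) (Nat.one_le_iff_ne_zero.1 hj)
  have hzero := pow_le_of_le_one hq0 hq1 (Nat.one_le_iff_ne_zero.1 hj)
  linarith

lemma abs_pow_one_sub_sub_neg_pow_le_one (hq0 : 0 ≤ q) (hq1 : q ≤ 1) (j : ℕ) :
    |(1 - q) ^ j - (-q) ^ j| ≤ 1 := by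
  rcases Nat.eq_zero_or_pos j with rfl | hj
  · simp
  · calc |(1 - q) ^ j - (-q) ^ j| ≤ |(1 - q) ^ j| + |(-q) ^ j| := abs_sub _ _
      _ = (1 - q) ^ j + q ^ j := by
          rw [abs_pow, abs_pow, abs_neg, abs_of_nonneg hq0, abs_of_nonneg (sub_nonneg.2 hq1)]
      _ ≤ 1 := pow_one_sub_add_pow_le_one hq0 hq1 hj

lemma abs_bernoulli_centralMoment_le (hq0 : 0 ≤ q) (hq1 : q ≤ 1) :
    ∀ j, |q * (1 - q) ^ j + (1 - q) * (-q) ^ j| ≤ bernoulliMomentBound (q * (1 - q)) j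
  | 0 => by simp [bernoulliMomentBound]
  | 1 => by
    have hmean : q * (1 - q) ^ 1 + (1 - q) * (-q) ^ 1 = 0 := by ring
    rw [hmean, abs_zero]
    rfl
  | j + 2 => by
    have hv : 0 ≤ q * (1 - q) := mul_nonneg hq0 (sub_nonneg.2 hq1)
    calc |q * (1 - q) ^ (j + 2) + (1 - q) * (-q) ^ (j + 2)|
        = |q * (1 - q) * ((1 - q) ^ (j + 1) - (-q) ^ (j + 1))| := by ring_nf
      _ = q * (1 - q) * |(1 - q) ^ (j + 1) - (-q) ^ (j + 1)| := by
          rw [abs_mul, abs_of_nonneg hv]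
      _ ≤ q * (1 - q) :=
          mul_le_of_le_one_right hv (abs_pow_one_sub_sub_neg_pow_le_one hq0 hq1 _)

lemma abs_bernoulli_moment_le {p ε : ℝ} (hq0 : 0 ≤ q) (hq1 : q ≤ 1) (hpq : |p - q| ≤ ε) (j : ℕ) :
    |p * (1 - q) ^ j + (1 - p) * (-q) ^ j| ≤ ε + bernoulliMomentBound (q * (1 - q)) j :=
  calc |p * (1 - q) ^ j + (1 - p) * (-q) ^ j|
      = |(p - q) * ((1 - q) ^ j - (-q) ^ j) + (q * (1 - q) ^ j + (1 - q) * (-q) ^ j)| := by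
        ring_nf
    _ ≤ |p - q| * |(1 - q) ^ j - (-q) ^ j| + |q * (1 - q) ^ j + (1 - q) * (-q) ^ j| := by
        rw [← abs_mul]
        exact abs_add_le _ _
    _ ≤ ε + bernoulliMomentBound (q * (1 - q)) j :=
        add_le_add ((mul_le_of_le_one_right (abs_nonneg _)
          (abs_pow_one_sub_sub_neg_pow_le_one hq0 hq1 j)).trans hpq)
          (abs_bernoulli_centralMoment_le hq0 hq1 j)

lemma abs_pow_add_abs_pow_le (hq0 : 0 ≤ q) (hq1 : q ≤ 1) {j : ℕ} (hj : 1 ≤ j) :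
    |(1 - q) ^ j| + |(-q) ^ j| ≤ 1 - 2 * bernoulliMomentBound (q * (1 - q)) j := by
  rw [abs_pow, abs_pow, abs_neg, abs_of_nonneg hq0, abs_of_nonneg (sub_nonneg.2 hq1)]
  rcases hj.eq_or_lt with rfl | hj
  · simp [bernoulliMomentBound]
  · have hone : (1 - q) ^ j ≤ (1 - q) ^ 2 :=
      pow_le_pow_of_le_one (sub_nonneg.2 hq1) (by linarith) hj
    have hzero : q ^ j ≤ q ^ 2 := pow_le_pow_of_le_one hq0 hq1 hj
    rw [bernoulliMomentBound_of_two_le hj]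
    linarith

lemma hasSum_bernoulliMomentBound (v x : ℝ) :
    HasSum (fun j => bernoulliMomentBound v j * (x ^ j / j.factorial))
      (1 + v * (Real.exp x - 1 - x)) := by
  have hexp : HasSum (fun j : ℕ => x ^ j / j.factorial) (Real.exp x) := by
    rw [Real.exp_eq_exp_ℝ]
    exact NormedSpace.expSeries_div_hasSum_exp x
  have htail := ((hasSum_nat_add_iff' 2).2 hexp).mul_left v
  have hlimit : 1 + v * (Real.exp x - 1 - x) -
        ∑ j ∈ Finset.range 2, bernoulliMomentBound v j * (x ^ j / j.factorial) =
      v * (Real.exp x - ∑ j ∈ Finset.range 2, x ^ j / j.factorial) := by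
    simp [Finset.sum_range_succ, bernoulliMomentBound, sub_sub]
  rw [← hasSum_nat_add_iff' 2, hlimit]
  exact htail

lemma one_add_mul_exp_sub_le_exp {x : ℝ} (hv : 0 ≤ v) (hx : |x| ≤ 1) :
    1 + v * (Real.exp x - 1 - x) ≤ Real.exp (v * x ^ 2) :=
  calc 1 + v * (Real.exp x - 1 - x) ≤ v * x ^ 2 + 1 := by
        rw [add_comm]
        gcongr
        exact (le_abs_self _).trans (Real.abs_exp_sub_one_sub_id_le hx)
    _ ≤ Real.exp (v * x ^ 2) := Real.add_one_le_exp _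

lemma sum_multinomial_mul_prod_bernoulliMomentBound_le_exp {ι : Type*} [Fintype ι] [DecidableEq ι]
    {x : ℝ} (hv : 0 ≤ v) (hx0 : 0 < x) (hx1 : x ≤ 1) (k : ℕ) :
    ∑ f ∈ Finset.univ.piAntidiag k,
        (Nat.multinomial Finset.univ f : ℝ) * ∏ i : ι, bernoulliMomentBound v (f i) ≤
      k.factorial / x ^ k * Real.exp (Fintype.card ι * v * x ^ 2) := by
  have hexp : 0 ≤ Real.exp x - 1 - x := by linarith [Real.add_one_le_exp x]
  calc ∑ f ∈ Finset.univ.piAntidiag k,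
        (Nat.multinomial Finset.univ f : ℝ) * ∏ i : ι, bernoulliMomentBound v (f i)
      ≤ k.factorial / x ^ k * ∏ _i : ι, (1 + v * (Real.exp x - 1 - x)) :=
        sum_multinomial_mul_prod_le (fun _ => bernoulliMomentBound_nonneg hv) hx0
          (fun _ => hasSum_bernoulliMomentBound v x) k
    _ ≤ k.factorial / x ^ k * ∏ _i : ι, Real.exp (v * x ^ 2) := by
        gcongr
        exact one_add_mul_exp_sub_le_exp hv (by rwa [abs_of_pos hx0])
    _ = k.factorial / x ^ k * Real.exp (Fintype.card ι * v * x ^ 2) := by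
        rw [Finset.prod_const, ← Real.exp_nat_mul, Finset.card_univ, mul_assoc]

lemma sum_multinomial_mul_prod_bernoulliMomentBound_le {ι : Type*} [Fintype ι] [DecidableEq ι]
    {μ : ℝ} (hv : 0 ≤ v) (hvμ : Fintype.card ι * v ≤ μ) {m : ℕ} (hm : m ≠ 0) :
    ∑ f ∈ Finset.univ.piAntidiag (2 * m),
        (Nat.multinomial Finset.univ f : ℝ) * ∏ i : ι, bernoulliMomentBound v (f i) ≤
      8 * (((2 * m : ℕ) : ℝ) * μ + ((2 * m : ℕ) : ℝ) ^ 2) ^ m := by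
  set K : ℝ := ((2 * m : ℕ) : ℝ) with hK
  have hK2 : K = 2 * m := by push_cast [hK]; rfl
  have hK0 : 0 < K := by positivity
  have hμ : 0 ≤ μ := le_trans (by positivity) hvμ
  -- With `y = x ^ 2` this choice makes `μ * y ≤ m`, so that the exponential costs at most `e ^ m`.
  set y : ℝ := K / (2 * (μ + K)) with hy
  have hy0 : 0 < y := by positivity
  have hy1 : y ≤ 1 := by rw [hy, div_le_one (by positivity)]; linarith
  have hexp : Real.exp (Fintype.card ι * v * √y ^ 2) ≤ Real.exp 1 ^ m := by
    rw [Real.sq_sqrt hy0.le, ← Real.exp_nat_mul, mul_one, Real.exp_le_exp]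
    calc Fintype.card ι * v * y ≤ (μ + K) * y := by gcongr; linarith
      _ = m := by rw [hy, hK2]; field_simp
  have hpow : √y ^ (2 * m) = (K / (2 * (μ + K))) ^ m := by rw [pow_mul, Real.sq_sqrt hy0.le]
  calc ∑ f ∈ Finset.univ.piAntidiag (2 * m),
        (Nat.multinomial Finset.univ f : ℝ) * ∏ i : ι, bernoulliMomentBound v (f i)
      ≤ (2 * m).factorial / √y ^ (2 * m) * Real.exp (Fintype.card ι * v * √y ^ 2) :=
        sum_multinomial_mul_prod_bernoulliMomentBound_le_exp hv (Real.sqrt_pos.2 hy0)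
          (Real.sqrt_le_one.2 hy1) (2 * m)
    _ ≤ (2 * m).factorial / √y ^ (2 * m) * Real.exp 1 ^ m := by gcongr
    _ = (2 * m).factorial * (2 * Real.exp 1) ^ m * ((μ + K) / K) ^ m := by
        rw [hpow, mul_pow, div_pow, div_pow, mul_pow]
        field_simp
    _ ≤ 8 * K ^ (2 * m) * ((μ + K) / K) ^ m := by
        gcongr ?_ * _
        exact factorial_two_mul_mul_exp_pow_le hm
    _ = 8 * (K * μ + K ^ 2) ^ m := by
        rw [pow_mul, mul_assoc, ← mul_pow]
        congr 2
        field_simp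

end BernoulliMoments

/-- The probability that a random subset of `S`, containing each `i` independently with probability
`x i`, equals `T ⊆ S`. For `x` with values in `{0,1}` it is the indicator of `x` being, on `S`, the
indicator function of `T`. -/
def subsetWeight {ι : Type*} [DecidableEq ι] (x : ι → ℝ) (S T : Finset ι) : ℝ :=
  ∏ i ∈ S, if i ∈ T then x i else 1 - x i

section SubsetWeight

variable {ι : Type*} [DecidableEq ι] {T R : Finset ι} {x : ι → ℝ}

lemma sum_powerset_prod_ite (S : Finset ι) (u v : ι → ℝ) :
    ∑ T ∈ S.powerset, ∏ i ∈ S, (if i ∈ T then u i else v i) = ∏ i ∈ S, (u i + v i) := by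
  rw [Finset.prod_add]
  refine Finset.sum_congr rfl fun T hT => ?_
  rw [Finset.prod_ite, Finset.filter_mem_eq_inter,
    Finset.inter_eq_right.2 (Finset.mem_powerset.1 hT), Finset.filter_notMem_eq_sdiff]

lemma sum_powerset_prod_ite_mul_subsetWeight (S : Finset ι) (x u v : ι → ℝ) :
    ∑ T ∈ S.powerset, (∏ i ∈ S, if i ∈ T then u i else v i) * subsetWeight x S T =
      ∏ i ∈ S, (x i * u i + (1 - x i) * v i) := by
  rw [← sum_powerset_prod_ite]
  refine Finset.sum_congr rfl fun T _ => ?_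
  rw [subsetWeight, ← Finset.prod_mul_distrib]
  refine Finset.prod_congr rfl fun i _ => ?_
  split_ifs <;> ring

lemma sum_subsetWeight (S : Finset ι) (x : ι → ℝ) :
    ∑ T ∈ S.powerset, subsetWeight x S T = 1 := by
  simp [subsetWeight, sum_powerset_prod_ite]

lemma sum_prod_ite_sub_mul_subsetWeight (S : Finset ι) (x : ι → ℝ) (q c : ℝ) :
    ∑ T ∈ S.powerset, ((∏ i ∈ S, if i ∈ T then 1 - q else -q) - c) * subsetWeight x S T =
      ∏ i ∈ S, (x i - q) - c := by
  simp_rw [sub_mul _ c]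
  rw [Finset.sum_sub_distrib, sum_powerset_prod_ite_mul_subsetWeight, ← Finset.mul_sum,
    sum_subsetWeight, mul_one]
  exact congrArg (· - c) (Finset.prod_congr rfl fun i _ => by ring)

lemma subsetWeight_insert_insert {a : ι} (ha : a ∉ R) :
    subsetWeight x (insert a R) (insert a T) = x a * subsetWeight x R T := by
  rw [subsetWeight, Finset.prod_insert ha, if_pos (Finset.mem_insert_self a T), subsetWeight]
  refine congrArg _ (Finset.prod_congr rfl fun i hi => ?_)
  simp only [Finset.mem_insert, ne_of_mem_of_not_mem hi ha, false_or]

lemma subsetWeight_insert_left {a : ι} (haR : a ∉ R) (haT : a ∉ T) :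
    subsetWeight x (insert a R) T = (1 - x a) * subsetWeight x R T := by
  rw [subsetWeight, Finset.prod_insert haR, if_neg haT, subsetWeight]

lemma subsetWeight_of_zero_or_one (hx : ∀ i, x i = 0 ∨ x i = 1) (S T : Finset ι) :
    subsetWeight x S T = if ∀ i ∈ S, x i = if i ∈ T then 1 else 0 then 1 else 0 := by
  rw [← Finset.prod_boole, subsetWeight]
  refine Finset.prod_congr rfl fun i _ => ?_
  rcases hx i with h | h <;> by_cases hT : i ∈ T <;> simp [h, hT]

lemma abs_sum_mul_sub_sum_mul_le {α : Type*} {A : Finset α} {c u w : α → ℝ} {ε : ℝ}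
    (h : ∀ T ∈ A, |u T - w T| ≤ ε) :
    |∑ T ∈ A, c T * u T - ∑ T ∈ A, c T * w T| ≤ ε * ∑ T ∈ A, |c T| := by
  rw [← Finset.sum_sub_distrib, Finset.mul_sum]
  refine (Finset.abs_sum_le_sum_abs _ _).trans (Finset.sum_le_sum fun T hT => ?_)
  rw [← mul_sub, abs_mul, mul_comm]
  exact mul_le_mul_of_nonneg_right (h T hT) (abs_nonneg _)

-- A product of values `1 - q` and `-q` has absolute value at least `|d ^ #R|`, so subtracting
-- `d ^ #R` changes its absolute value by `± d ^ #R` according to its sign, and the signs cancel.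
lemma sum_abs_prod_ite_sub_pow_card (hR : R.Nonempty) {q d : ℝ} (hdq : |d| ≤ q)
    (hdq' : |d| ≤ 1 - q) :
    ∑ T ∈ R.powerset, |(∏ i ∈ R, if i ∈ T then 1 - q else -q) - d ^ R.card| = 1 := by
  have hterm (T : Finset ι) : |(∏ i ∈ R, if i ∈ T then 1 - q else -q) - d ^ R.card| =
      (∏ i ∈ R, if i ∈ T then 1 - q else q) - d ^ R.card * ∏ i ∈ R, if i ∈ T then 1 else -1 := by
    set σ : ℝ := ∏ i ∈ R, if i ∈ T then 1 else -1
    set H : ℝ := ∏ i ∈ R, if i ∈ T then 1 - q else q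
    have hσ : σ = 1 ∨ σ = -1 := by
      rw [← sq_eq_one_iff, ← Finset.prod_pow]
      exact Finset.prod_eq_one fun i _ => by split_ifs <;> norm_num
    have hfactor : (∏ i ∈ R, if i ∈ T then 1 - q else -q) = σ * H := by
      rw [← Finset.prod_mul_distrib]
      exact Finset.prod_congr rfl fun i _ => by split_ifs <;> ring
    have hle : |d ^ R.card| ≤ H := by
      rw [abs_pow, ← Finset.prod_const]
      exact Finset.prod_le_prod (fun _ _ => abs_nonneg d) fun i _ => by split_ifs <;> assumption
    rw [abs_le] at hle
    rw [hfactor]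
    rcases hσ with hσ | hσ <;> rw [hσ]
    · rw [abs_of_nonneg (by linarith)]
      ring
    · rw [abs_of_nonpos (by linarith)]
      ring
  simp_rw [hterm]
  rw [Finset.sum_sub_distrib, ← Finset.mul_sum, sum_powerset_prod_ite, sum_powerset_prod_ite]
  simp [hR.card_ne_zero]

end SubsetWeight

section ZeroOneVariables

variable {Ω ι : Type*} [MeasurableSpace Ω] {P : Measure Ω} {q : ℝ} {Y : Ω → ℝ}
  {X : ι → Ω → ℝ} {S : Finset ι}

lemma measureReal_le_abs_le_integral_pow_div {k : ℕ} (hk : Even k) (hk0 : k ≠ 0)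
    (hY : Integrable (fun ω => Y ω ^ k) P) {t : ℝ} (ht : 0 < t) :
    P.real {ω | t ≤ |Y ω|} ≤ (∫ ω, Y ω ^ k ∂P) / t ^ k := by
  have hset : {ω | t ≤ |Y ω|} = {ω | t ^ k ≤ Y ω ^ k} := by
    ext ω
    rw [Set.mem_ofPred_eq, Set.mem_ofPred_eq, ← hk.pow_abs (Y ω),
      pow_le_pow_iff_left₀ ht.le (abs_nonneg _) hk0]
  rw [le_div_iff₀ (pow_pos ht k), mul_comm, hset]
  exact mul_meas_ge_le_integral_of_nonneg (ae_of_all _ fun ω => hk.pow_nonneg _) hY _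

lemma integral_eq_measureReal_of_zero_or_one (hY : Measurable Y) (h01 : ∀ ω, Y ω = 0 ∨ Y ω = 1) :
    ∫ ω, Y ω ∂P = P.real {ω | Y ω = 1} := by
  have hset : MeasurableSet {ω | Y ω = 1} := hY (measurableSet_singleton 1)
  rw [← integral_indicator_one hset]
  refine integral_congr_ae (ae_of_all _ fun ω => ?_)
  rcases h01 ω with h | h <;> simp [Set.indicator, h]

variable [IsProbabilityMeasure P]

lemma integrable_prod_of_abs_le_one (hX : ∀ i, Measurable (X i)) (hX1 : ∀ i ω, |X i ω| ≤ 1)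
    (S : Finset ι) : Integrable (fun ω => ∏ i ∈ S, X i ω) P := by
  refine Integrable.of_bound (Finset.measurable_prod S fun i _ => hX i).aestronglyMeasurable 1
    (ae_of_all _ fun ω => ?_)
  rw [Real.norm_eq_abs, Finset.abs_prod]
  exact Finset.prod_le_one (fun i _ => abs_nonneg _) fun i _ => hX1 i ω

lemma integrable_subsetWeight [DecidableEq ι] (hX : ∀ i, Measurable (X i))
    (h01 : ∀ i ω, X i ω = 0 ∨ X i ω = 1) (S T : Finset ι) :
    Integrable (fun ω => subsetWeight (fun i => X i ω) S T) P := by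
  refine integrable_prod_of_abs_le_one (X := fun i ω => if i ∈ T then X i ω else 1 - X i ω)
    (fun i => ?_) (fun i ω => ?_) S
  · split_ifs
    exacts [hX i, (hX i).const_sub 1]
  · rcases h01 i ω with h | h <;> simp only [h] <;> split_ifs <;> simp

lemma integrable_of_zero_or_one (hY : Measurable Y) (h01 : ∀ ω, Y ω = 0 ∨ Y ω = 1) :
    Integrable Y P :=
  Integrable.of_bound hY.aestronglyMeasurable 1
    (ae_of_all _ fun ω => by rcases h01 ω with h | h <;> simp [h])

lemma integral_mem_Icc_of_zero_or_one (hY : Measurable Y) (h01 : ∀ ω, Y ω = 0 ∨ Y ω = 1) :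
    ∫ ω, Y ω ∂P ∈ Set.Icc (0 : ℝ) 1 := by
  have hnonneg : ∀ ω, 0 ≤ Y ω := fun ω => by rcases h01 ω with h | h <;> simp [h]
  have hle : ∀ ω, Y ω ≤ 1 := fun ω => by rcases h01 ω with h | h <;> simp [h]
  exact ⟨integral_nonneg hnonneg,
    by simpa using
      integral_mono (μ := P) (integrable_of_zero_or_one hY h01) (integrable_const 1) hle⟩

lemma integral_sub_sq_of_zero_or_one (hY : Measurable Y) (h01 : ∀ ω, Y ω = 0 ∨ Y ω = 1)
    (hq : ∫ ω, Y ω ∂P = q) : ∫ ω, (Y ω - q) ^ 2 ∂P = q * (1 - q) := by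
  have hlinear (ω : Ω) : (Y ω - q) ^ 2 = (1 - 2 * q) * Y ω + q ^ 2 := by
    rcases h01 ω with h | h <;> rw [h] <;> ring
  simp_rw [hlinear]
  rw [integral_add ((integrable_of_zero_or_one hY h01).const_mul _) (integrable_const _),
    integral_const_mul, hq, integral_const, probReal_univ, one_smul]
  ring

lemma exists_prod_pow_le_half_sum_sq {f : ι → ℕ} (hf : 2 ≤ ∑ i ∈ S, f i) :
    ∃ a b, ∀ y : ι → ℝ, (∀ i, |y i| ≤ 1) → ∏ i ∈ S, y i ^ f i ≤ (y a ^ 2 + y b ^ 2) / 2 := by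
  classical
  have hprod {y : ι → ℝ} (hy : ∀ i, |y i| ≤ 1) {U : Finset ι} (hU : U ⊆ S) :
      ∏ i ∈ S, y i ^ f i ≤ ∏ i ∈ U, |y i| ^ f i := by
    refine (le_abs_self _).trans ?_
    simp_rw [Finset.abs_prod, abs_pow]
    exact Finset.prod_le_prod_of_subset_of_le_one hU (fun i _ => by positivity)
      fun i _ _ => pow_le_one₀ (abs_nonneg _) (hy i)
  by_cases hlarge : ∃ a ∈ S, 2 ≤ f a
  · obtain ⟨a, ha, hfa⟩ := hlarge
    refine ⟨a, a, fun y hy => (hprod hy (Finset.singleton_subset_iff.2 ha)).trans ?_⟩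
    rw [Finset.prod_singleton, add_self_div_two, ← sq_abs (y a)]
    exact pow_le_pow_of_le_one (abs_nonneg _) (hy a) hfa
  · push Not at hlarge
    have hfilter : 1 < (S.filter fun i => f i ≠ 0).card := by
      have hle : ∑ i ∈ S, f i ≤ ∑ i ∈ S, if f i ≠ 0 then 1 else 0 :=
        Finset.sum_le_sum fun i hi => by have := hlarge i hi; split_ifs <;> omega
      rw [← Finset.card_filter] at hle
      omega
    obtain ⟨a, ha, b, hb, hab⟩ := Finset.one_lt_card.1 hfilter
    rw [Finset.mem_filter] at ha hb
    refine ⟨a, b, fun y hy => (hprod hy (Finset.insert_subset ha.1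
      (Finset.singleton_subset_iff.2 hb.1))).trans ?_⟩
    rw [Finset.prod_pair hab, ← sq_abs (y a), ← sq_abs (y b)]
    calc |y a| ^ f a * |y b| ^ f b ≤ |y a| * |y b| := by
          gcongr
          · exact pow_le_of_le_one (abs_nonneg _) (hy a) ha.2
          · exact pow_le_of_le_one (abs_nonneg _) (hy b) hb.2
      _ ≤ (|y a| ^ 2 + |y b| ^ 2) / 2 := by linarith [two_mul_le_add_sq |y a| |y b|]

lemma abs_sub_le_one_of_zero_or_one (hq0 : 0 ≤ q) (hq1 : q ≤ 1) {y : ℝ} (hy : y = 0 ∨ y = 1) :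
    |y - q| ≤ 1 := by
  rw [abs_le]
  rcases hy with h | h <;> constructor <;> linarith

lemma integrable_prod_sub_pow (hX : ∀ i, Measurable (X i)) (h01 : ∀ i ω, X i ω = 0 ∨ X i ω = 1)
    (hq0 : 0 ≤ q) (hq1 : q ≤ 1) (S : Finset ι) (f : ι → ℕ) :
    Integrable (fun ω => ∏ i ∈ S, (X i ω - q) ^ f i) P :=
  integrable_prod_of_abs_le_one (X := fun i ω => (X i ω - q) ^ f i)
    (fun i => ((hX i).sub_const q).pow_const _) (fun i ω => by
      rw [abs_pow]
      exact pow_le_one₀ (abs_nonneg _) (abs_sub_le_one_of_zero_or_one hq0 hq1 (h01 i ω))) S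

lemma integrable_sum_sub_pow (hX : ∀ i, Measurable (X i)) (h01 : ∀ i ω, X i ω = 0 ∨ X i ω = 1)
    (hq0 : 0 ≤ q) (hq1 : q ≤ 1) (S : Finset ι) (k : ℕ) :
    Integrable (fun ω => (∑ i ∈ S, (X i ω - q)) ^ k) P := by
  classical
  simp_rw [Finset.sum_pow_eq_sum_piAntidiag]
  exact integrable_finsetSum _ fun f _ =>
    (integrable_prod_sub_pow hX h01 hq0 hq1 S f).const_mul _

lemma integrable_sub_mul_subsetWeight [DecidableEq ι] (hX : ∀ i, Measurable (X i))
    (h01 : ∀ i ω, X i ω = 0 ∨ X i ω = 1) (hq0 : 0 ≤ q) (hq1 : q ≤ 1) (a : ι) (R T : Finset ι) :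
    Integrable (fun ω => (X a ω - q) * subsetWeight (fun i => X i ω) R T) P :=
  (integrable_subsetWeight hX h01 R T).bdd_mul (c := 1)
    ((hX a).sub_const q).aestronglyMeasurable
    (ae_of_all _ fun ω => abs_sub_le_one_of_zero_or_one hq0 hq1 (h01 a ω))

lemma integral_prod_sub_pow_le_variance (hX : ∀ i, Measurable (X i))
    (h01 : ∀ i ω, X i ω = 0 ∨ X i ω = 1) (hq0 : 0 ≤ q) (hq1 : q ≤ 1)
    (hq : ∀ i, ∫ ω, X i ω ∂P = q) {f : ι → ℕ} (hf : 2 ≤ ∑ i ∈ S, f i) :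
    ∫ ω, ∏ i ∈ S, (X i ω - q) ^ f i ∂P ≤ q * (1 - q) := by
  obtain ⟨a, b, hab⟩ := exists_prod_pow_le_half_sum_sq hf
  have hint (i : ι) : Integrable (fun ω => (X i ω - q) ^ 2) P := by
    simpa using integrable_prod_sub_pow hX h01 hq0 hq1 {i} fun _ => 2
  calc ∫ ω, ∏ i ∈ S, (X i ω - q) ^ f i ∂P
      ≤ ∫ ω, ((X a ω - q) ^ 2 + (X b ω - q) ^ 2) / 2 ∂P :=
        integral_mono (integrable_prod_sub_pow hX h01 hq0 hq1 S f)
          (((hint a).add (hint b)).div_const 2) fun ω =>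
          hab (fun i => X i ω - q) fun i => abs_sub_le_one_of_zero_or_one hq0 hq1 (h01 i ω)
    _ = q * (1 - q) := by
        rw [integral_div, integral_add (hint a) (hint b),
          integral_sub_sq_of_zero_or_one (hX a) (h01 a) (hq a),
          integral_sub_sq_of_zero_or_one (hX b) (h01 b) (hq b), add_self_div_two]

end ZeroOneVariables

namespace KWiseApproxIndep

variable {Ω : Type*} [MeasureSpace Ω] {n k : ℕ} {X : Fin n → Ω → ℝ} {ε p q : ℝ}
  {S R T : Finset (Fin n)}

lemma abs_integral_subsetWeight_sub_le (h : KWiseApproxIndep n X k ε p)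
    (hX : ∀ i, Measurable (X i)) (h01 : ∀ i ω, X i ω = 0 ∨ X i ω = 1) (hS : S.card ≤ k)
    (T : Finset (Fin n)) :
    |(∫ ω, subsetWeight (fun i => X i ω) S T) - subsetWeight (fun _ => p) S T| ≤ ε := by
  set idx : Fin S.card → Fin n := fun j => S.equivFin.symm j
  have hidx : Function.Injective idx := Subtype.val_injective.comp S.equivFin.symm.injective
  set E : Set Ω := {ω | ∀ j, X (idx j) ω = if decide (idx j ∈ T) then 1 else 0}
  have hE : MeasurableSet E := by
    rw [show E = ⋂ j, {ω | X (idx j) ω = if decide (idx j ∈ T) then 1 else 0} by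
      ext; simp [E]]
    exact MeasurableSet.iInter fun j => hX (idx j) (measurableSet_singleton _)
  have hforall (r : Fin n → Prop) : (∀ i ∈ S, r i) ↔ ∀ j, r (idx j) := by
    exact Subtype.forall'.trans (S.equivFin.symm.forall_congr_right (q := fun i : S => r i)).symm
  have hweight (ω : Ω) : subsetWeight (fun i => X i ω) S T = E.indicator 1 ω := by
    rw [subsetWeight_of_zero_or_one (fun i => h01 i ω), Set.indicator_apply, Pi.one_apply]
    simp only [E, hforall, decide_eq_true_eq, Set.mem_ofPred_eq]
  have hprod : subsetWeight (fun _ => p) S T =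
      ∏ j, if decide (idx j ∈ T) then p else 1 - p := by
    rw [subsetWeight, ← Finset.prod_coe_sort, ← S.equivFin.symm.prod_comp]
    simp [idx]
  simp_rw [hweight]
  rw [integral_indicator_one hE, hprod]
  exact h S.card hS idx hidx fun j => decide (idx j ∈ T)

lemma nonneg (h : KWiseApproxIndep n X k ε p) : 0 ≤ ε :=
  (abs_nonneg _).trans (h 0 k.zero_le Fin.elim0 (fun i => i.elim0) Fin.elim0)

lemma abs_sub_integral_le (h : KWiseApproxIndep n X k ε p) (hX : ∀ i, Measurable (X i))
    (h01 : ∀ i ω, X i ω = 0 ∨ X i ω = 1) (hk : 1 ≤ k) (i : Fin n) : |p - ∫ ω, X i ω| ≤ ε := by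
  have hsingle := h.abs_integral_subsetWeight_sub_le hX h01 (S := {i}) (by simpa) {i}
  rw [abs_sub_comm]
  simpa [subsetWeight] using hsingle

variable [IsProbabilityMeasure (volume : Measure Ω)]

lemma abs_integral_prod_sub_prod_le (h : KWiseApproxIndep n X k ε p)
    (hX : ∀ i, Measurable (X i)) (h01 : ∀ i ω, X i ω = 0 ∨ X i ω = 1) (hS : S.card ≤ k)
    (u v : Fin n → ℝ) :
    |(∫ ω, ∏ i ∈ S, (X i ω * u i + (1 - X i ω) * v i)) - ∏ i ∈ S, (p * u i + (1 - p) * v i)| ≤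
      ε * ∏ i ∈ S, (|u i| + |v i|) := by
  simp_rw [← sum_powerset_prod_ite_mul_subsetWeight]
  rw [integral_finsetSum _ fun T _ => (integrable_subsetWeight hX h01 S T).const_mul _]
  simp_rw [integral_const_mul]
  refine (abs_sum_mul_sub_sum_mul_le fun T _ =>
    h.abs_integral_subsetWeight_sub_le hX h01 hS T).trans_eq ?_
  rw [← sum_powerset_prod_ite]
  simp_rw [Finset.abs_prod, apply_ite abs]

lemma abs_integral_sub_mul_subsetWeight_sub_le (h : KWiseApproxIndep n X k ε p)
    (hX : ∀ i, Measurable (X i)) (h01 : ∀ i ω, X i ω = 0 ∨ X i ω = 1) (hq0 : 0 ≤ q) (hq1 : q ≤ 1)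
    {a : Fin n} (ha : a ∉ R) (hR : R.card < k) (hT : T ⊆ R) :
    |(∫ ω, (X a ω - q) * subsetWeight (fun i => X i ω) R T) -
        (p - q) * subsetWeight (fun _ => p) R T| ≤ ε := by
  have hcard : (insert a R).card ≤ k := by rwa [Finset.card_insert_of_notMem ha]
  have hsplit (x : Fin n → ℝ) : (x a - q) * subsetWeight x R T =
      (1 - q) * subsetWeight x (insert a R) (insert a T) - q * subsetWeight x (insert a R) T := by
    rw [subsetWeight_insert_insert ha, subsetWeight_insert_left ha (mt (@hT a) ha)]
    ring
  have hone := abs_le.1 (h.abs_integral_subsetWeight_sub_le hX h01 hcard (insert a T))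
  have hzero := abs_le.1 (h.abs_integral_subsetWeight_sub_le hX h01 hcard T)
  rw [hsplit fun _ => p]
  simp_rw [fun ω => hsplit fun i => X i ω]
  rw [integral_sub ((integrable_subsetWeight hX h01 _ _).const_mul _)
    ((integrable_subsetWeight hX h01 _ _).const_mul _), integral_const_mul, integral_const_mul,
    abs_le]
  constructor <;> nlinarith

-- Because `X a` is centred at its mean, a constant may be subtracted from `∏ i ∈ R, (X i - q)`.
-- The constant `(p - q) ^ #R` makes the comparison value vanish.
lemma abs_integral_prod_insert_sub_le (h : KWiseApproxIndep n X k ε p)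
    (hX : ∀ i, Measurable (X i)) (h01 : ∀ i ω, X i ω = 0 ∨ X i ω = 1) {a : Fin n}
    (hqa : ∫ ω, X a ω = q) (hq : |p - q| ≤ q) (hq' : |p - q| ≤ 1 - q) (ha : a ∉ R)
    (hR : R.Nonempty) (hRk : R.card < k) :
    |∫ ω, ∏ i ∈ insert a R, (X i ω - q)| ≤ ε := by
  have hq0 : 0 ≤ q := (abs_nonneg _).trans hq
  have hq1 : q ≤ 1 := sub_nonneg.1 ((abs_nonneg _).trans hq')
  set c : Finset (Fin n) → ℝ := fun T => (∏ i ∈ R, if i ∈ T then 1 - q else -q) - (p - q) ^ R.card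
  have hexpand (x : Fin n → ℝ) (z : ℝ) : ∑ T ∈ R.powerset, c T * (z * subsetWeight x R T) =
      z * ∏ i ∈ R, (x i - q) - z * (p - q) ^ R.card := by
    simp_rw [mul_left_comm _ z]
    rw [← Finset.mul_sum, sum_prod_ite_sub_mul_subsetWeight, mul_sub]
  have hcompare : ∑ T ∈ R.powerset, c T * ((p - q) * subsetWeight (fun _ => p) R T) = 0 := by
    rw [hexpand, Finset.prod_const, sub_self]
  have hXa := integrable_of_zero_or_one (P := volume) (hX a) (h01 a)
  have hXaq : Integrable fun ω => X a ω - q := hXa.sub (integrable_const q)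
  have hcentred : ∫ ω, (X a ω - q) = 0 := by
    rw [integral_sub hXa (integrable_const q), hqa, integral_const, probReal_univ, one_smul,
      sub_self]
  have hintegral : ∫ ω, ∏ i ∈ insert a R, (X i ω - q) =
      ∑ T ∈ R.powerset, c T * ∫ ω, (X a ω - q) * subsetWeight (fun i => X i ω) R T := by
    simp_rw [← integral_const_mul]
    rw [← integral_finsetSum _ fun T _ =>
      (integrable_sub_mul_subsetWeight hX h01 hq0 hq1 a R T).const_mul _]
    simp_rw [hexpand, Finset.prod_insert ha]
    rw [integral_sub ?_ (hXaq.mul_const _), integral_mul_const, hcentred, zero_mul, sub_zero]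
    simpa [Finset.prod_insert ha] using
      integrable_prod_sub_pow (P := volume) hX h01 hq0 hq1 (insert a R) fun _ => 1
  rw [hintegral, ← sub_zero (∑ T ∈ _, _), ← hcompare]
  refine (abs_sum_mul_sub_sum_mul_le fun T hT => h.abs_integral_sub_mul_subsetWeight_sub_le hX h01
    hq0 hq1 ha hRk (Finset.mem_powerset.1 hT)).trans_eq ?_
  rw [sum_abs_prod_ite_sub_pow_card hR hq hq', mul_one]

lemma integral_prod_sub_pow_le_of_two_le (h : KWiseApproxIndep n X k ε p)
    (hX : ∀ i, Measurable (X i)) (h01 : ∀ i ω, X i ω = 0 ∨ X i ω = 1)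
    (hq0 : 0 ≤ q) (hq1 : q ≤ 1) (hpq : |p - q| ≤ ε) (hεv : ε ≤ q * (1 - q)) (hS : S.card ≤ k)
    {f : Fin n → ℕ} (hf : ∀ i ∈ S, 1 ≤ f i) {a b : Fin n} (ha : a ∈ S) (hb : b ∈ S)
    (hab : a ≠ b) (hfa : 2 ≤ f a) :
    ∫ ω, ∏ i ∈ S, (X i ω - q) ^ f i ≤ ε + ∏ i ∈ S, bernoulliMomentBound (q * (1 - q)) (f i) := by
  set g : Fin n → ℝ := fun i => bernoulliMomentBound (q * (1 - q)) (f i)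
  have hv : 0 ≤ q * (1 - q) := mul_nonneg hq0 (sub_nonneg.2 hq1)
  have hg : ∀ i ∈ S, g i ≤ 1 / 4 := fun i hi =>
    (bernoulliMomentBound_le hv (hf i hi)).trans (by linarith [sq_nonneg (2 * q - 1)])
  have hinterpolate (i : Fin n) (ω : Ω) :
      (X i ω - q) ^ f i = X i ω * (1 - q) ^ f i + (1 - X i ω) * (-q) ^ f i := by
    rcases h01 i ω with hi | hi <;> simp [hi]
  have happrox := (abs_le.1 (h.abs_integral_prod_sub_prod_le hX h01 hS (fun i => (1 - q) ^ f i)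
    fun i => (-q) ^ f i)).2
  have hmoments : ∏ i ∈ S, (p * (1 - q) ^ f i + (1 - p) * (-q) ^ f i) ≤ ∏ i ∈ S, (ε + g i) := by
    refine (le_abs_self _).trans ?_
    rw [Finset.abs_prod]
    exact Finset.prod_le_prod (fun i _ => abs_nonneg _) fun i _ =>
      abs_bernoulli_moment_le hq0 hq1 hpq (f i)
  have herror : ∏ i ∈ S, (|(1 - q) ^ f i| + |(-q) ^ f i|) ≤ ∏ i ∈ S, (1 - 2 * g i) :=
    Finset.prod_le_prod (fun i _ => by positivity) fun i hi =>
      abs_pow_add_abs_pow_le hq0 hq1 (hf i hi)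
  simp_rw [hinterpolate]
  calc ∫ ω, ∏ i ∈ S, (X i ω * (1 - q) ^ f i + (1 - X i ω) * (-q) ^ f i)
      ≤ ∏ i ∈ S, (ε + g i) + ε * ∏ i ∈ S, (1 - 2 * g i) := by
        linarith [mul_le_mul_of_nonneg_left herror h.nonneg]
    _ ≤ ε + ∏ i ∈ S, g i :=
        prod_add_add_mul_prod_le ha hb hab h.nonneg
          (hεv.trans_eq (bernoulliMomentBound_of_two_le hfa).symm)
          (fun i _ => bernoulliMomentBound_nonneg hv (f i)) hg

lemma integral_prod_sub_le (h : KWiseApproxIndep n X k ε p)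
    (hX : ∀ i, Measurable (X i)) (h01 : ∀ i ω, X i ω = 0 ∨ X i ω = 1)
    (hmean : ∀ i, ∫ ω, X i ω = q) (hq : |p - q| ≤ q) (hq' : |p - q| ≤ 1 - q) (hS : S.card ≤ k)
    (hS2 : 2 ≤ S.card) : ∫ ω, ∏ i ∈ S, (X i ω - q) ≤ ε := by
  obtain ⟨a, ha⟩ : S.Nonempty := Finset.card_pos.1 (by omega)
  obtain ⟨R, haR, rfl⟩ : ∃ R, a ∉ R ∧ insert a R = S :=
    ⟨S.erase a, Finset.notMem_erase a S, Finset.insert_erase ha⟩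
  rw [Finset.card_insert_of_notMem haR] at hS hS2
  exact (le_abs_self _).trans (h.abs_integral_prod_insert_sub_le hX h01 (hmean a) hq hq' haR
    (Finset.card_pos.1 (by omega)) hS)

lemma integral_prod_sub_pow_le (h : KWiseApproxIndep n X k ε p)
    (hX : ∀ i, Measurable (X i)) (h01 : ∀ i ω, X i ω = 0 ∨ X i ω = 1)
    (hq0 : 0 ≤ q) (hq1 : q ≤ 1) (hmean : ∀ i, ∫ ω, X i ω = q) (hS : S.card ≤ k)
    {f : Fin n → ℕ} (hf : ∀ i ∈ S, 1 ≤ f i) (hf2 : 2 ≤ ∑ i ∈ S, f i) :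
    ∫ ω, ∏ i ∈ S, (X i ω - q) ^ f i ≤ ε + ∏ i ∈ S, bernoulliMomentBound (q * (1 - q)) (f i) := by
  have hv : 0 ≤ q * (1 - q) := mul_nonneg hq0 (sub_nonneg.2 hq1)
  have hvariance := integral_prod_sub_pow_le_variance (P := volume) hX h01 hq0 hq1 hmean hf2
  have hprod : 0 ≤ ∏ i ∈ S, bernoulliMomentBound (q * (1 - q)) (f i) :=
    Finset.prod_nonneg fun i _ => bernoulliMomentBound_nonneg hv (f i)
  rcases le_total (q * (1 - q)) ε with hεv | hεv
  · linarith
  obtain ⟨c, hc⟩ : S.Nonempty := Finset.nonempty_of_sum_ne_zero (f := f) (by omega)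
  have hpq : |p - q| ≤ ε := by
    rw [← hmean c]
    exact h.abs_sub_integral_le hX h01 ((Finset.card_pos.2 ⟨c, hc⟩).trans_le hS) c
  by_cases hlarge : ∃ a ∈ S, 2 ≤ f a
  · obtain ⟨a, ha, hfa⟩ := hlarge
    rcases S.eq_singleton_or_nontrivial ha with rfl | hnontrivial
    · rw [Finset.prod_singleton, bernoulliMomentBound_of_two_le hfa]
      linarith [h.nonneg]
    · obtain ⟨b, hb, hba⟩ := hnontrivial.exists_ne a
      exact h.integral_prod_sub_pow_le_of_two_le hX h01 hq0 hq1 hpq hεv hS hf ha hb hba.symm hfa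
  · have hone : ∀ i ∈ S, f i = 1 := fun i hi =>
      le_antisymm (by by_contra! hi2; exact hlarge ⟨i, hi, hi2⟩) (hf i hi)
    have hpow (ω : Ω) : ∏ i ∈ S, (X i ω - q) ^ f i = ∏ i ∈ S, (X i ω - q) :=
      Finset.prod_congr rfl fun i hi => by rw [hone i hi, pow_one]
    simp_rw [hpow]
    refine (h.integral_prod_sub_le hX h01 hmean (by nlinarith) (by nlinarith) hS ?_).trans
      (le_add_of_nonneg_right hprod)
    rwa [Finset.card_eq_sum_ones, ← Finset.sum_congr rfl hone]

lemma integral_prod_univ_sub_pow_le (h : KWiseApproxIndep n X k ε p)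
    (hX : ∀ i, Measurable (X i)) (h01 : ∀ i ω, X i ω = 0 ∨ X i ω = 1)
    (hq0 : 0 ≤ q) (hq1 : q ≤ 1) (hmean : ∀ i, ∫ ω, X i ω = q) {f : Fin n → ℕ}
    (hf : ∑ i, f i = k) (hk : 2 ≤ k) :
    ∫ ω, ∏ i, (X i ω - q) ^ f i ≤ ε + ∏ i, bernoulliMomentBound (q * (1 - q)) (f i) := by
  set S : Finset (Fin n) := Finset.univ.filter fun i => f i ≠ 0
  have hpos : ∀ i ∈ S, 1 ≤ f i := fun i hi => Nat.one_le_iff_ne_zero.2 (Finset.mem_filter.1 hi).2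
  have hsum : ∑ i ∈ S, f i = k := by rw [Finset.sum_filter_ne_zero, hf]
  have hcard : S.card ≤ k := by
    rw [← hsum, Finset.card_eq_sum_ones]
    exact Finset.sum_le_sum hpos
  have hrestrict {F : Fin n → ℕ → ℝ} (hF : ∀ i, F i 0 = 1) :
      ∏ i, F i (f i) = ∏ i ∈ S, F i (f i) :=
    (Finset.prod_filter_of_ne (p := fun i => f i ≠ 0) fun i _ hi h0 =>
      hi (by rw [h0, hF])).symm
  simp_rw [fun ω => hrestrict (F := fun i j => (X i ω - q) ^ j) fun _ => pow_zero _]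
  rw [hrestrict (F := fun _ => bernoulliMomentBound (q * (1 - q))) fun _ => rfl]
  exact h.integral_prod_sub_pow_le hX h01 hq0 hq1 hmean hcard hpos (hk.trans_eq hsum.symm)

lemma integral_sum_sub_pow_le {m : ℕ} (h : KWiseApproxIndep n X (2 * m) ε p)
    (hX : ∀ i, Measurable (X i)) (h01 : ∀ i ω, X i ω = 0 ∨ X i ω = 1) (hq0 : 0 ≤ q) (hq1 : q ≤ 1)
    (hmean : ∀ i, ∫ ω, X i ω = q) (hm : m ≠ 0) :
    ∫ ω, (∑ i, (X i ω - q)) ^ (2 * m) ≤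
      8 * (((2 * m : ℕ) : ℝ) * (n * q) + ((2 * m : ℕ) : ℝ) ^ 2) ^ m + ε * (n : ℝ) ^ (2 * m) := by
  have hv : 0 ≤ q * (1 - q) := mul_nonneg hq0 (sub_nonneg.2 hq1)
  have hmultinomial : ∑ f ∈ (Finset.univ : Finset (Fin n)).piAntidiag (2 * m),
      (Nat.multinomial Finset.univ f : ℝ) = (n : ℝ) ^ (2 * m) := by
    simpa using
      (Finset.sum_pow_eq_sum_piAntidiag Finset.univ (fun _ : Fin n => (1 : ℝ)) (2 * m)).symm
  simp_rw [Finset.sum_pow_eq_sum_piAntidiag]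
  rw [integral_finsetSum _ fun f _ =>
    (integrable_prod_sub_pow hX h01 hq0 hq1 _ f).const_mul _]
  simp_rw [integral_const_mul]
  calc ∑ f ∈ Finset.univ.piAntidiag (2 * m),
        (Nat.multinomial Finset.univ f : ℝ) * ∫ ω, ∏ i, (X i ω - q) ^ f i
      ≤ ∑ f ∈ Finset.univ.piAntidiag (2 * m), (Nat.multinomial Finset.univ f : ℝ) *
          (ε + ∏ i, bernoulliMomentBound (q * (1 - q)) (f i)) :=
        Finset.sum_le_sum fun f hf =>
          mul_le_mul_of_nonneg_left (h.integral_prod_univ_sub_pow_le hX h01 hq0 hq1 hmean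
            (Finset.mem_piAntidiag.1 hf).1 (by omega)) (Nat.cast_nonneg _)
    _ = ∑ f ∈ Finset.univ.piAntidiag (2 * m), (Nat.multinomial Finset.univ f : ℝ) *
          ∏ i, bernoulliMomentBound (q * (1 - q)) (f i) + ε * (n : ℝ) ^ (2 * m) := by
        simp_rw [mul_add]
        rw [Finset.sum_add_distrib, ← Finset.sum_mul, hmultinomial]
        ring
    _ ≤ 8 * (((2 * m : ℕ) : ℝ) * (n * q) + ((2 * m : ℕ) : ℝ) ^ 2) ^ m +
          ε * (n : ℝ) ^ (2 * m) := by
        gcongr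
        refine sum_multinomial_mul_prod_bernoulliMomentBound_le hv ?_ hm
        rw [Fintype.card_fin]
        gcongr
        exact mul_le_of_le_one_right hq0 (by linarith)

end KWiseApproxIndep

theorem tail_bound_kwise_eps_approx_general
    {Ω : Type*} [MeasureSpace Ω] [IsProbabilityMeasure (volume : Measure Ω)]
    (n k : ℕ) (ε p : ℝ) (hn : 1 ≤ n) (hk : k ≠ 0) (hkeven : Even k)
    (X : Fin n → Ω → ℝ) (hmeas : ∀ i, Measurable (X i))
    (h01 : ∀ i ω, X i ω = 0 ∨ X i ω = 1)
    (hident : ∀ i j : Fin n, volume {ω | X i ω = 1} = volume {ω | X j ω = 1})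
    (happrox : KWiseApproxIndep n X k ε p)
    (t : ℝ) (ht : 0 < t) :
    (volume {ω | t ≤ |(∑ i, X i ω) - ∫ ω', (∑ i, X i ω') ∂volume|}).toReal ≤
      8 * (((k : ℝ) * (∫ ω', (∑ i, X i ω') ∂volume) + (k : ℝ) ^ 2) / t ^ 2) ^ (k / 2) +
        ε * ((n : ℝ) / t) ^ k := by
  obtain ⟨m, rfl⟩ := even_iff_two_dvd.1 hkeven
  set q := ∫ ω, X ⟨0, hn⟩ ω
  have hmean (i : Fin n) : ∫ ω, X i ω = q := by
    simp only [q, integral_eq_measureReal_of_zero_or_one (hmeas _) (h01 _), Measure.real,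
      hident i ⟨0, hn⟩]
  obtain ⟨hq0, hq1⟩ := integral_mem_Icc_of_zero_or_one (P := volume) (hmeas ⟨0, hn⟩) (h01 _)
  have hμ : ∫ ω, ∑ i, X i ω = n * q := by
    rw [integral_finsetSum _ fun i _ => integrable_of_zero_or_one (hmeas i) (h01 i)]
    simp [hmean]
  have hcentre (ω : Ω) : ∑ i, X i ω - n * q = ∑ i, (X i ω - q) := by simp
  simp_rw [hμ, hcentre]
  calc (volume {ω | t ≤ |∑ i, (X i ω - q)|}).toReal
      ≤ (∫ ω, (∑ i, (X i ω - q)) ^ (2 * m)) / t ^ (2 * m) :=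
        measureReal_le_abs_le_integral_pow_div hkeven hk
          (integrable_sum_sub_pow hmeas h01 hq0 hq1 _ _) ht
    _ ≤ (8 * (((2 * m : ℕ) : ℝ) * (n * q) + ((2 * m : ℕ) : ℝ) ^ 2) ^ m + ε * (n : ℝ) ^ (2 * m)) /
          t ^ (2 * m) := by
        gcongr
        exact happrox.integral_sum_sub_pow_le hmeas h01 hq0 hq1 hmean (by omega)
    _ = _ := by
        rw [Nat.mul_div_cancel_left m two_pos, div_pow, div_pow, ← pow_mul]
        ring

/-- Tail bound for `k`-wise `ε`-approximately independent 0-1 random variables: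
`Pr[|X − μ| ≥ t] ≤ 8·((k·μ + k²)/t²)^{k/2} + ε·(n/t)^k`. -/
theorem tail_bound_kwise_eps_approx
    {Ω : Type*} [MeasureSpace Ω] [IsProbabilityMeasure (volume : Measure Ω)]
    (n k : ℕ) (ε p : ℝ) (hn : 1 ≤ n) (hk4 : 4 ≤ k) (hkeven : Even k)
    (hε : 0 ≤ ε) (hp0 : 0 ≤ p) (hp1 : p ≤ 1)
    (X : Fin n → Ω → ℝ) (hmeas : ∀ i, Measurable (X i))
    (h01 : ∀ i ω, X i ω = 0 ∨ X i ω = 1)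
    (hident : ∀ i j : Fin n, volume {ω | X i ω = 1} = volume {ω | X j ω = 1})
    (happrox : KWiseApproxIndep n X k ε p)
    (t : ℝ) (ht : 0 < t) :
    (volume {ω | t ≤ |(∑ i, X i ω) - ∫ ω', (∑ i, X i ω') ∂volume|}).toReal ≤
      8 * (((k : ℝ) * (∫ ω', (∑ i, X i ω') ∂volume) + (k : ℝ) ^ 2) / t ^ 2) ^ (k / 2) +
        ε * ((n : ℝ) / t) ^ k :=
  tail_bound_kwise_eps_approx_general n k ε p hn (by omega) hkeven X hmeas h01 hident happrox t ht
end

section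
/- Let n and b be integers with (log₂ n)^{10} ≤ b ≤ n. Suppose k := 15·(ln n)/(ln b) is an even integer with k ≥ 4, and set ε = n^{−6} and p = b^{−1/5}. Let S_1,…,S_n be subsets of {1,…,n} with |S_i| = b and i ∈ S_i for every i, and let X_1,…,X_n be {0,1}-valued random variables with identical marginal distributions that are k-wise ε-approximately independent for the product distribution D(n,p). Then each of the following n+1 events holds with probability at least 1 − 9·n^{−3}: for each i ∈ {1,…,n}, the event Σ_{j∈S_i} X_j > 0; and the event Σ_{i=1}^n X_i ≤ 2·n·b^{−1/5}. -/
open MeasureTheory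

/-!
The random variables are encoded as a random word of bits. Expanding the `k`-th power of a centered
sum over `T`, `k`-wise approximate independence says that its `k`-th moment is within `ε |T| ^ k` of
the corresponding moment for independent bits. The latter is read off the moment generating function
at `s = 1 / √(|T| p)`, where `mgf ≤ e`: since `x ^ k ≤ k! (exp x + exp (-x))`, the moment is at most
`2 e k! (|T| p) ^ (k / 2)`. Markov's inequality then bounds the probability of a deviation of
`|T| p` by `2 e k! / (|T| p) ^ (k / 2) + ε / p ^ k`. Both bad events are such deviations, for
`T = S i` and for all indices.

The definition of `k` means `b ^ k = n ^ 15`, so `p ^ k = n⁻³` and `(b p) ^ (k / 2) = n ^ 6`, while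
`k ^ 5 ≤ (log₂ n) ^ 10 ≤ b` gives `k! ≤ n ^ 3`; the total is at most `(2 e + 1) n⁻³ ≤ 9 n⁻³`.
-/

open ProbabilityTheory unitInterval

section CylindersClose

variable {ι α : Type*} [MeasurableSpace α]

/-- Two measures on the words `ι → α` agree up to `ε` on every cylinder that prescribes at most `k`
letters. For the law of random bits and the product distribution this is `k`-wise `ε`-approximate
independence, phrased with finite sets of coordinates instead of injective tuples. -/
def CylindersClose (μ ν : Measure (ι → α)) (k : ℕ) (ε : ℝ) : Prop :=
  ∀ U : Finset ι, U.card ≤ k → ∀ b : ι → α,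
    |μ.real {y | ∀ j ∈ U, y j = b j} - ν.real {y | ∀ j ∈ U, y j = b j}| ≤ ε

variable [Fintype α] [MeasurableSingletonClass α]

lemma integral_comp_restrict_eq_sum [DecidableEq ι] {μ : Measure (ι → α)} [IsFiniteMeasure μ]
    (U : Finset ι) (F : (U → α) → ℝ) :
    ∫ y, F (U.restrict y) ∂μ = ∑ b, μ.real {y | U.restrict y = b} * F b := by
  rw [← integral_map (φ := U.restrict) (by fun_prop) Integrable.of_finite.aestronglyMeasurable,
    integral_fintype .of_finite]
  refine Finset.sum_congr rfl fun b _ => ?_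
  rw [map_measureReal_apply (by fun_prop) (measurableSet_singleton b), smul_eq_mul]
  rfl

namespace CylindersClose

variable {μ ν : Measure (ι → α)} [IsFiniteMeasure μ] [IsFiniteMeasure ν] {k : ℕ} {ε : ℝ}

lemma abs_integral_comp_restrict_sub_le [DecidableEq ι] [Nonempty α]
    (h : CylindersClose μ ν k ε) {U : Finset ι} (hU : U.card ≤ k) (F : (U → α) → ℝ) :
    |∫ y, F (U.restrict y) ∂μ - ∫ y, F (U.restrict y) ∂ν| ≤ ε * ∑ b, |F b| := by
  have cylinder_close (b : U → α) :
      |μ.real {y | U.restrict y = b} - ν.real {y | U.restrict y = b}| ≤ ε := by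
    obtain ⟨b, rfl⟩ := Subtype.surjective_restrict (β := fun _ : ι => α) (· ∈ U) b
    simpa [funext_iff] using h U hU b
  rw [integral_comp_restrict_eq_sum, integral_comp_restrict_eq_sum, ← Finset.sum_sub_distrib,
    Finset.mul_sum]
  refine (Finset.abs_sum_le_sum_abs _ _).trans (Finset.sum_le_sum fun b _ => ?_)
  rw [← sub_mul, abs_mul]
  exact mul_le_mul_of_nonneg_right (cylinder_close b) (abs_nonneg _)

/-- The bound does not deteriorate when `f` repeats an index: on the image of `f` the product is a
product of powers `φ j ^ c` with `c ≥ 1`, and these still satisfy `∑ a, |φ j a ^ c| ≤ 1`. -/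
lemma abs_integral_prod_sub_le [Nonempty α] (h : CylindersClose μ ν k ε) (f : Fin k → ι)
    {φ : ι → α → ℝ} (hφ : ∀ j, ∑ a, |φ j a| ≤ 1) :
    |∫ y, ∏ l, φ (f l) (y (f l)) ∂μ - ∫ y, ∏ l, φ (f l) (y (f l)) ∂ν| ≤ ε := by
  classical
  set U := Finset.univ.image f
  have hU : U.card ≤ k := Finset.card_image_le.trans_eq (by simp)
  let c (j : ι) : ℕ := Finset.card {l | f l = j}
  have one_le_c (j : U) : c j ≠ 0 := by
    obtain ⟨l, -, hl⟩ := Finset.mem_image.1 j.2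
    exact Finset.card_ne_zero_of_mem (a := l) (by simp [hl])
  have prod_eq (y : ι → α) :
      ∏ l, φ (f l) (y (f l)) = ∏ j : U, φ j (U.restrict y j) ^ c j := by
    rw [Finset.prod_comp (fun j => φ j (y j)) f]
    exact (Finset.prod_coe_sort U fun j => φ j (y j) ^ c j).symm
  have abs_le_one (j : ι) (a : α) : |φ j a| ≤ 1 :=
    (Finset.single_le_sum (fun a _ => abs_nonneg (φ j a)) (Finset.mem_univ a)).trans (hφ j)
  have sum_le_one : ∑ b : U → α, |∏ j : U, φ j (b j) ^ c j| ≤ 1 := by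
    simp only [Finset.abs_prod, abs_pow]
    rw [← Fintype.prod_sum fun (j : U) a => |φ j a| ^ c j]
    refine Finset.prod_le_one (fun j _ => by positivity) fun j _ => (hφ j).trans' ?_
    exact Finset.sum_le_sum fun a _ =>
      pow_le_of_le_one (abs_nonneg _) (abs_le_one j a) (one_le_c j)
  have eps_nonneg : 0 ≤ ε := (abs_nonneg _).trans (h ∅ (by simp) fun _ => Classical.arbitrary α)
  simp only [prod_eq]
  exact (h.abs_integral_comp_restrict_sub_le hU fun b => ∏ j : U, φ j (b j) ^ c j).trans
    (mul_le_of_le_one_right eps_nonneg sum_le_one)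

lemma abs_integral_sum_pow_sub_le [Finite ι] [Nonempty α] (h : CylindersClose μ ν k ε)
    (T : Finset ι) {φ : ι → α → ℝ} (hφ : ∀ j, ∑ a, |φ j a| ≤ 1) :
    |∫ y, (∑ j ∈ T, φ j (y j)) ^ k ∂μ - ∫ y, (∑ j ∈ T, φ j (y j)) ^ k ∂ν| ≤ ε * T.card ^ k := by
  classical
  simp only [Finset.sum_pow']
  rw [integral_finsetSum _ fun _ _ => .of_finite, integral_finsetSum _ fun _ _ => .of_finite,
    ← Finset.sum_sub_distrib]
  calc _ ≤ ∑ _f ∈ Fintype.piFinset fun _ : Fin k => T, ε :=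
        (Finset.abs_sum_le_sum_abs _ _).trans
          (Finset.sum_le_sum fun f _ => h.abs_integral_prod_sub_le f hφ)
    _ = ε * T.card ^ k := by simp [mul_comm]

end CylindersClose

end CylindersClose

section Moments

lemma even_pow_le_factorial_mul_exp_add_exp {k : ℕ} (hk : Even k) (x : ℝ) :
    x ^ k ≤ k.factorial * (Real.exp x + Real.exp (-x)) := by
  have h := Real.pow_div_factorial_le_exp |x| (abs_nonneg x) k
  rw [hk.pow_abs, div_le_iff₀' (by positivity)] at h
  exact h.trans (by gcongr; exact Real.exp_abs_le x)

lemma pow_mul_integral_pow_le_factorial_mul_mgf {Ω : Type*} [MeasurableSpace Ω] {μ : Measure Ω}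
    {Z : Ω → ℝ} {k : ℕ} (hk : Even k) {s : ℝ} (hZ : Integrable (fun ω => Z ω ^ k) μ)
    (hpos : Integrable (fun ω => Real.exp (s * Z ω)) μ)
    (hneg : Integrable (fun ω => Real.exp (-s * Z ω)) μ) :
    s ^ k * ∫ ω, Z ω ^ k ∂μ ≤ k.factorial * (mgf Z μ s + mgf Z μ (-s)) := by
  rw [mgf, mgf, ← integral_add hpos hneg, ← integral_const_mul, ← integral_const_mul]
  refine integral_mono (hZ.const_mul _) ((hpos.add hneg).const_mul _) fun ω => ?_
  simpa [mul_pow] using even_pow_le_factorial_mul_exp_add_exp hk (s * Z ω)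

end Moments

section ProductBernoulli

variable {ι : Type*} [Fintype ι] {p : I}

/-- The product distribution `D(n,p)`: independent bits indexed by `ι`, each `true` with
probability `p`. -/
noncomputable def productBernoulli (ι : Type*) [Fintype ι] (p : I) : Measure (ι → Bool) :=
  Measure.pi fun _ => Ber(true, false, p)

instance : IsProbabilityMeasure (productBernoulli ι p) := by
  unfold productBernoulli; infer_instance

lemma productBernoulli_real_cylinder (U : Finset ι) (b : ι → Bool) :
    (productBernoulli ι p).real {y | ∀ j ∈ U, y j = b j} =
      ∏ j ∈ U, if b j then (p : ℝ) else 1 - p := by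
  have cylinder_eq : {y : ι → Bool | ∀ j ∈ U, y j = b j} = (U : Set ι).pi fun j => {b j} := by
    ext y; simp [Set.mem_pi]
  rw [measureReal_def, cylinder_eq, productBernoulli, ← Measure.infinitePi_eq_pi,
    Measure.infinitePi_pi _ fun _ _ => measurableSet_singleton _, ENNReal.toReal_prod]
  refine Finset.prod_congr rfl fun j _ => ?_
  cases b j <;> simp

/-- `∑_{j ∈ T} (y j - p)`, the bits being read as the numbers `0` and `1`. -/
def centeredSum (p : ℝ) (T : Finset ι) (y : ι → Bool) : ℝ :=
  ∑ j ∈ T, ((if y j then 1 else 0) - p)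

lemma bernoulli_mgf_le {p s : ℝ} (hp : 0 ≤ p) (hs : |s| ≤ 1) :
    p * Real.exp (s * (1 - p)) + (1 - p) * Real.exp (s * (0 - p)) ≤ Real.exp (s ^ 2 * p) := by
  have exp_le : Real.exp s ≤ 1 + s + s ^ 2 := by
    linarith [(abs_le.1 (Real.abs_exp_sub_one_sub_id_le hs)).2]
  calc p * Real.exp (s * (1 - p)) + (1 - p) * Real.exp (s * (0 - p))
      = Real.exp (-(s * p)) * (1 + p * (Real.exp s - 1)) := by
        rw [show s * (1 - p) = -(s * p) + s by ring, show s * (0 - p) = -(s * p) by ring,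
          Real.exp_add]
        ring
    _ ≤ Real.exp (-(s * p)) * Real.exp (p * (s + s ^ 2)) := by
        gcongr
        nlinarith [Real.add_one_le_exp (p * (s + s ^ 2))]
    _ = Real.exp (s ^ 2 * p) := by rw [← Real.exp_add]; ring_nf

lemma mgf_centeredSum_le (T : Finset ι) {s : ℝ} (hs : |s| ≤ 1) :
    mgf (centeredSum p T) (productBernoulli ι p) s ≤ Real.exp (s ^ 2 * (T.card * p)) := by
  classical
  let g (j : ι) (c : Bool) : ℝ := if j ∈ T then Real.exp (s * ((if c then 1 else 0) - p)) else 1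
  have exp_eq (y : ι → Bool) : Real.exp (s * centeredSum p T y) = ∏ j, g j (y j) := by
    simp only [centeredSum, Finset.mul_sum, Real.exp_sum, g, Finset.prod_ite_mem,
      Finset.univ_inter]
  have integral_g (j : ι) : ∫ c, g j c ∂Ber(true, false, p) =
      if j ∈ T then p * Real.exp (s * (1 - p)) + (1 - p) * Real.exp (s * (0 - p)) else 1 := by
    rw [integral_bernoulliMeasure]
    split_ifs with hj <;> simp [g, hj]
  have : 0 ≤ 1 - (p : ℝ) := sub_nonneg.2 p.2.2
  have : 0 ≤ (p : ℝ) := p.2.1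
  calc mgf (centeredSum p T) (productBernoulli ι p) s
      = (p * Real.exp (s * (1 - p)) + (1 - p) * Real.exp (s * (0 - p))) ^ T.card := by
        simp only [mgf, exp_eq, productBernoulli, integral_fintype_prod_eq_prod, integral_g,
          Finset.prod_ite_mem, Finset.univ_inter, Finset.prod_const]
    _ ≤ Real.exp (s ^ 2 * p) ^ T.card := by gcongr; exact bernoulli_mgf_le p.2.1 hs
    _ = Real.exp (s ^ 2 * (T.card * p)) := by rw [← Real.exp_nat_mul]; ring_nf

lemma integral_centeredSum_pow_le (T : Finset ι) (hT : 1 ≤ (T.card : ℝ) * p) (r : ℕ) :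
    ∫ y, centeredSum p T y ^ (2 * r) ∂productBernoulli ι p ≤
      2 * Real.exp 1 * (2 * r).factorial * (T.card * p) ^ r := by
  set M : ℝ := T.card * p
  have hM : 0 < M := one_pos.trans_le hT
  set s : ℝ := (√M)⁻¹
  have sq_mul : s ^ 2 * M = 1 := by rw [inv_pow, Real.sq_sqrt hM.le, inv_mul_cancel₀ hM.ne']
  have abs_le_one : |s| ≤ 1 := by
    rw [abs_of_nonneg (by positivity)]
    exact inv_le_one_of_one_le₀ (Real.one_le_sqrt.2 hT)
  have mgf_pos := mgf_centeredSum_le (p := p) T abs_le_one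
  have mgf_neg := mgf_centeredSum_le (p := p) (s := -s) T (by rwa [abs_neg])
  rw [neg_sq] at mgf_neg
  rw [sq_mul] at mgf_pos mgf_neg
  have scaled := pow_mul_integral_pow_le_factorial_mul_mgf (μ := productBernoulli ι p)
    (Z := centeredSum p T) (s := s) (even_two_mul r) .of_finite .of_finite .of_finite
  have pow_s : s ^ (2 * r) = (M ^ r)⁻¹ := by
    rw [pow_mul, eq_inv_of_mul_eq_one_left sq_mul, inv_pow]
  rw [pow_s, inv_mul_le_iff₀ (by positivity)] at scaled
  calc _ ≤ _ := scaled
    _ ≤ M ^ r * ((2 * r).factorial * (Real.exp 1 + Real.exp 1)) := by gcongr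
    _ = _ := by ring

/-- Markov's inequality for the `2r`-th moment, which `μ` shares with the product distribution up
to `ε |T| ^ (2 * r)`. -/
lemma CylindersClose.measureReal_deviation_le {μ : Measure (ι → Bool)} [IsFiniteMeasure μ] {r : ℕ}
    {ε : ℝ} (h : CylindersClose μ (productBernoulli ι p) (2 * r) ε) (T : Finset ι)
    (hT : 1 ≤ (T.card : ℝ) * p) :
    μ.real {y | (T.card : ℝ) * p ≤ |centeredSum p T y|} ≤
      2 * Real.exp 1 * (2 * r).factorial / (T.card * p) ^ r + ε / p ^ (2 * r) := by
  have hM : 0 < (T.card : ℝ) * p := one_pos.trans_le hT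
  have hcard : (T.card : ℝ) ≠ 0 := left_ne_zero_of_mul hM.ne'
  have hp : (p : ℝ) ≠ 0 := right_ne_zero_of_mul hM.ne'
  have markov : (T.card * p : ℝ) ^ (2 * r) * μ.real {y | (T.card : ℝ) * p ≤ |centeredSum p T y|} ≤
      ∫ y, centeredSum p T y ^ (2 * r) ∂μ := by
    refine (mul_le_mul_of_nonneg_left (measureReal_mono fun y hy => ?_) (by positivity)).trans
      (mul_meas_ge_le_integral_of_nonneg (.of_forall fun y => (even_two_mul r).pow_nonneg _)
        .of_finite ((T.card * p : ℝ) ^ (2 * r)))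
    rw [Set.mem_ofPred_eq, ← (even_two_mul r).pow_abs (centeredSum p T y)]
    exact pow_le_pow_left₀ hM.le hy _
  have moment_close := (abs_le.1 (h.abs_integral_sum_pow_sub_le T
    (φ := fun _ c => (if c then 1 else 0) - p)
    (by simp [abs_of_nonneg (sub_nonneg.2 p.2.2), abs_of_nonneg p.2.1]))).2
  have moment_le := integral_centeredSum_pow_le T hT r
  rw [← mul_le_mul_iff_right₀ (pow_pos hM (2 * r))]
  calc _ ≤ _ := markov
    _ ≤ 2 * Real.exp 1 * (2 * r).factorial * (T.card * p) ^ r + ε * T.card ^ (2 * r) :=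
      (sub_le_iff_le_add'.1 moment_close).trans (by gcongr; exact moment_le)
    _ = _ := by simp only [mul_pow, pow_mul']; field_simp

end ProductBernoulli

section RandomBits

/-- The random word of bits recorded by `0`-`1` valued random variables: the `j`-th bit is `true`
when `X j = 1`. -/
noncomputable def bits {Ω ι : Type*} (X : ι → Ω → ℝ) (ω : Ω) (j : ι) : Bool :=
  decide (X j ω = 1)

variable {Ω ι : Type*} {X : ι → Ω → ℝ}

lemma measurable_bits [MeasurableSpace Ω] (hX : ∀ j, Measurable (X j)) : Measurable (bits X) :=
  measurable_pi_iff.2 fun j => measurable_to_bool <| by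
    simpa [bits, Set.preimage] using hX j (measurableSet_singleton 1)

lemma ite_bits_eq {j : ι} {ω : Ω} (h01 : X j ω = 0 ∨ X j ω = 1) :
    (if bits X ω j then 1 else 0) = X j ω := by
  rcases h01 with h | h <;> simp [bits, h]

lemma bits_eq_iff {j : ι} {ω : Ω} (h01 : X j ω = 0 ∨ X j ω = 1) (c : Bool) :
    bits X ω j = c ↔ X j ω = if c then 1 else 0 := by
  rcases h01 with h | h <;> cases c <;> simp [bits, h]

end RandomBits

namespace KWiseApproxIndep

variable {Ω : Type*} [MeasureSpace Ω] {n k : ℕ} {X : Fin n → Ω → ℝ} {ε : ℝ} {p : I}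

lemma cylindersClose (h : KWiseApproxIndep n X k ε p) (hX : ∀ j, Measurable (X j))
    (h01 : ∀ j ω, X j ω = 0 ∨ X j ω = 1) :
    CylindersClose (volume.map (bits X)) (productBernoulli (Fin n) p) k ε := by
  intro U hU b
  let e := U.orderEmbOfFin rfl
  have mem_iff (P : Fin n → Prop) : (∀ j ∈ U, P j) ↔ ∀ i, P (e i) := by
    rw [← Set.forall_mem_range (f := e), Finset.range_orderEmbOfFin]
    rfl
  have prod_eq (a : Fin n → ℝ) : ∏ j ∈ U, a j = ∏ i, a (e i) := by
    conv_lhs => rw [← Finset.map_orderEmbOfFin_univ U rfl, Finset.prod_map]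
    rfl
  have law_cylinder : (volume.map (bits X)).real {y | ∀ j ∈ U, y j = b j} =
      volume.real {ω | ∀ i, X (e i) ω = if b (e i) then 1 else 0} := by
    rw [map_measureReal_apply (measurable_bits hX) (Set.toFinite _).measurableSet]
    simp only [Set.preimage_ofPred_eq, mem_iff, bits_eq_iff (h01 _ _)]
  rw [law_cylinder, productBernoulli_real_cylinder, prod_eq]
  exact h U.card hU e e.injective fun i => b (e i)

lemma measureReal_deviation_le [IsProbabilityMeasure (volume : Measure Ω)] {r : ℕ}
    (h : KWiseApproxIndep n X (2 * r) ε p) (hX : ∀ j, Measurable (X j))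
    (h01 : ∀ j ω, X j ω = 0 ∨ X j ω = 1) (T : Finset (Fin n)) (hT : 1 ≤ (T.card : ℝ) * p) :
    volume.real {ω | (T.card : ℝ) * p ≤ |∑ j ∈ T, (X j ω - p)|} ≤
      2 * Real.exp 1 * (2 * r).factorial / (T.card * p) ^ r + ε / p ^ (2 * r) := by
  have : IsProbabilityMeasure (volume.map (bits X)) :=
    Measure.isProbabilityMeasure_map (measurable_bits hX).aemeasurable
  have tail := (h.cylindersClose hX h01).measureReal_deviation_le T hT
  rw [map_measureReal_apply (measurable_bits hX) (Set.toFinite _).measurableSet] at tail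
  simpa only [Set.preimage_ofPred_eq, centeredSum, ite_bits_eq (h01 _ _)] using tail

end KWiseApproxIndep

section Events

variable {Ω ι : Type*} [MeasurableSpace Ω] {μ : Measure Ω} [IsProbabilityMeasure μ] {δ : ℝ}

lemma one_sub_le_measureReal_of_compl_subset {E F : Set Ω} (hE : MeasurableSet E)
    (hEF : Eᶜ ⊆ F) (hF : μ.real F ≤ δ) : 1 - δ ≤ μ.real E := by
  have h : μ.real Eᶜ ≤ δ := (measureReal_mono hEF).trans hF
  rw [probReal_compl_eq_one_sub hE] at h
  linarith

variable {X : ι → Ω → ℝ} {T : Finset ι} {p : ℝ}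

lemma one_sub_le_measureReal_sum_pos (hX : ∀ j, Measurable (X j))
    (hδ : μ.real {ω | T.card * p ≤ |∑ j ∈ T, (X j ω - p)|} ≤ δ) :
    1 - δ ≤ μ.real {ω | 0 < ∑ j ∈ T, X j ω} := by
  refine one_sub_le_measureReal_of_compl_subset (measurableSet_lt (by fun_prop) (by fun_prop))
    (fun ω hω => ?_) hδ
  simp only [Set.mem_compl_iff, Set.mem_ofPred_eq, not_lt] at hω ⊢
  rw [Finset.sum_sub_distrib, Finset.sum_const, nsmul_eq_mul]
  exact le_abs.2 (.inr (by linarith))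

lemma one_sub_le_measureReal_sum_le (hX : ∀ j, Measurable (X j))
    (hδ : μ.real {ω | T.card * p ≤ |∑ j ∈ T, (X j ω - p)|} ≤ δ) :
    1 - δ ≤ μ.real {ω | ∑ j ∈ T, X j ω ≤ 2 * T.card * p} := by
  refine one_sub_le_measureReal_of_compl_subset (measurableSet_le (by fun_prop) (by fun_prop))
    (fun ω hω => ?_) hδ
  simp only [Set.mem_compl_iff, Set.mem_ofPred_eq, not_le] at hω ⊢
  rw [Finset.sum_sub_distrib, Finset.sum_const, nsmul_eq_mul]
  exact le_abs.2 (.inl (by linarith))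

end Events

section Parameters

lemma pow_eq_pow_of_eq_mul_log_div_log {x y : ℝ} {k m : ℕ} (hx : 0 < x) (hy : 1 < y)
    (hk : (k : ℝ) = m * Real.log x / Real.log y) : y ^ k = x ^ m := by
  have hlog : Real.log y ≠ 0 := (Real.log_pos hy).ne'
  have hy0 : 0 < y := one_pos.trans hy
  refine Real.log_injOn_pos (pow_pos hy0 k) (pow_pos hx m) ?_
  rw [Real.log_pow, Real.log_pow, hk, div_mul_cancel₀ _ hlog]

variable {n b k : ℕ}

lemma two_le_of_eq_mul_log_div_log {x c : ℝ} (hk : k ≠ 0)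
    (hkval : (k : ℝ) = c * Real.log x / Real.log b) : 2 ≤ b := by
  by_contra! hb
  have hk0 : (k : ℝ) = 0 := by interval_cases b <;> simpa using hkval
  exact hk (by exact_mod_cast hk0)

/-- If `b = n` then `k = 15` is odd; so `b < n`, hence `n ≥ 3`, and `log₂ n ≥ 3/2` makes
`(log₂ n)^{10}` at least `2^5`. -/
lemma five_le_logb (hb : Real.logb 2 n ^ 10 ≤ b) (hbn : b ≤ n) (hb2 : 2 ≤ b)
    (hkval : (k : ℝ) = 15 * Real.log n / Real.log b) (hkeven : Even k) :
    5 ≤ Real.logb 2 b := by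
  have hbn' : b ≠ n := by
    rintro rfl
    have hlog : Real.log b ≠ 0 := (Real.log_pos (by exact_mod_cast hb2)).ne'
    rw [mul_div_cancel_right₀ _ hlog] at hkval
    obtain rfl : k = 15 := by exact_mod_cast hkval
    exact absurd hkeven (by decide)
  have hn : (3 : ℝ) ≤ n := by exact_mod_cast (by omega : 3 ≤ n)
  have three_halves_le : 3 / 2 ≤ Real.logb 2 n := by
    have h : 3 ≤ Real.logb 2 ((n : ℝ) ^ 2) := by
      rw [Real.le_logb_iff_rpow_le (by norm_num) (by positivity)]
      norm_num
      nlinarith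
    rw [Real.logb_pow] at h
    push_cast at h
    linarith
  rw [Real.le_logb_iff_rpow_le (by norm_num) (by positivity)]
  calc (2 : ℝ) ^ (5 : ℝ) ≤ (3 / 2) ^ 10 := by norm_num
    _ ≤ Real.logb 2 n ^ 10 := by gcongr
    _ ≤ b := hb

lemma pow_five_le_of_eq_mul_log_div_log (hb : Real.logb 2 n ^ 10 ≤ b) (hbn : b ≤ n) (hb2 : 2 ≤ b)
    (hkval : (k : ℝ) = 15 * Real.log n / Real.log b) (hkeven : Even k) : k ^ 5 ≤ b := by
  have five_le_b := five_le_logb hb hbn hb2 hkval hkeven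
  have b_le_n : Real.logb 2 b ≤ Real.logb 2 n :=
    Real.logb_le_logb_of_le (by norm_num) (by positivity) (by exact_mod_cast hbn)
  have k_eq : (k : ℝ) = 15 * Real.logb 2 n / Real.logb 2 b := by
    rw [hkval, mul_div_assoc, mul_div_assoc, Real.logb, Real.logb,
      div_div_div_cancel_right₀ (Real.log_pos one_lt_two).ne']
  have k_le : (k : ℝ) ≤ Real.logb 2 n ^ 2 := by
    rw [k_eq, div_le_iff₀ (by linarith)]
    have : 15 ≤ Real.logb 2 n * Real.logb 2 b := by nlinarith
    nlinarith
  have : (k : ℝ) ^ 5 ≤ b :=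
    calc (k : ℝ) ^ 5 ≤ (Real.logb 2 n ^ 2) ^ 5 := by gcongr
      _ = Real.logb 2 n ^ 10 := by ring
      _ ≤ b := hb
  exact_mod_cast this

lemma factorial_le_cube (hk : k ^ 5 ≤ b) (hbk : b ^ k = n ^ 15) : k.factorial ≤ n ^ 3 := by
  refine le_of_pow_le_pow_left₀ (n := 5) (by norm_num) (by positivity) ?_
  calc k.factorial ^ 5 ≤ (k ^ k) ^ 5 := by gcongr; exact k.factorial_le_pow
    _ = (k ^ 5) ^ k := by ring
    _ ≤ b ^ k := by gcongr
    _ = (n ^ 3) ^ 5 := by rw [hbk, ← pow_mul]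

variable {p : ℝ}

lemma pow_eq_inv_cube (hp0 : 0 ≤ p) (hp : p ^ 5 = (b : ℝ)⁻¹) (hbk : b ^ k = n ^ 15) :
    p ^ k = ((n : ℝ) ^ 3)⁻¹ := by
  refine (pow_left_inj₀ (by positivity) (by positivity) (by norm_num : 5 ≠ 0)).1 ?_
  have hbk' : (b : ℝ) ^ k = (n : ℝ) ^ 15 := by exact_mod_cast hbk
  rw [pow_right_comm, hp, inv_pow, hbk', inv_pow, ← pow_mul]

lemma one_le_mul_of_pow_five_eq_inv (hb : b ≠ 0) (hp0 : 0 ≤ p) (hp : p ^ 5 = (b : ℝ)⁻¹) :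
    1 ≤ b * p := by
  have hb1 : (1 : ℝ) ≤ b := by exact_mod_cast Nat.one_le_iff_ne_zero.2 hb
  refine (one_le_pow_iff_of_nonneg (by positivity) (by norm_num : 5 ≠ 0)).1 ?_
  calc (1 : ℝ) ≤ b ^ 4 := one_le_pow₀ hb1
    _ = (b * p) ^ 5 := by rw [mul_pow, hp]; field_simp

lemma mul_pow_eq_pow_six {r : ℕ} (hn : n ≠ 0) (hp0 : 0 ≤ p) (hp : p ^ 5 = (b : ℝ)⁻¹)
    (hbk : b ^ (2 * r) = n ^ 15) : (b * p) ^ r = (n : ℝ) ^ 6 := by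
  refine (pow_left_inj₀ (by positivity) (by positivity) two_ne_zero).1 ?_
  have hbk' : (b : ℝ) ^ (2 * r) = (n : ℝ) ^ 15 := by exact_mod_cast hbk
  rw [← pow_mul, mul_comm r 2, mul_pow, hbk', pow_eq_inv_cube hp0 hp hbk]
  field_simp

lemma two_mul_exp_mul_div_add_div_le {a m q ε N : ℝ} (hN : 0 < N) (ha0 : 0 ≤ a) (ha : a ≤ N)
    (hm : N ^ 2 ≤ m) (hq : q = N⁻¹) (hε : ε ≤ (N ^ 2)⁻¹) :
    2 * Real.exp 1 * a / m + ε / q ≤ 9 * N⁻¹ := by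
  have main : 2 * Real.exp 1 * a / m ≤ 2 * 3 * N / N ^ 2 := by
    gcongr
    exact Real.exp_one_lt_three.le
  have error : ε / q ≤ (N ^ 2)⁻¹ * N := by
    rw [hq, div_inv_eq_mul]
    gcongr
  calc _ ≤ 2 * 3 * N / N ^ 2 + (N ^ 2)⁻¹ * N := add_le_add main error
    _ = 7 * N⁻¹ := by field_simp; norm_num
    _ ≤ 9 * N⁻¹ := by gcongr; norm_num

end Parameters

lemma KWiseApproxIndep.measureReal_deviation_le_nine_mul {Ω : Type*} [MeasureSpace Ω]
    [IsProbabilityMeasure (volume : Measure Ω)] {n b k : ℕ} (hb : Real.logb 2 n ^ 10 ≤ b)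
    (hbn : b ≤ n) (hkval : (k : ℝ) = 15 * Real.log n / Real.log b) (hkeven : Even k) (hk : k ≠ 0)
    {ε p : ℝ} (hε : ε ≤ (n : ℝ) ^ (-6 : ℝ)) (hp : p = (b : ℝ) ^ (-(1 / 5) : ℝ)) {X : Fin n → Ω → ℝ}
    (hX : ∀ j, Measurable (X j)) (h01 : ∀ j ω, X j ω = 0 ∨ X j ω = 1)
    (h : KWiseApproxIndep n X k ε p) (T : Finset (Fin n)) (hT : b ≤ T.card) :
    volume.real {ω | T.card * p ≤ |∑ j ∈ T, (X j ω - p)|} ≤ 9 * (n : ℝ) ^ (-3 : ℝ) := by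
  have hb2 : 2 ≤ b := two_le_of_eq_mul_log_div_log hk hkval
  have hn : n ≠ 0 := by omega
  have hb1 : (1 : ℝ) < b := by exact_mod_cast hb2
  have hbk : b ^ k = n ^ 15 := by
    exact_mod_cast pow_eq_pow_of_eq_mul_log_div_log (x := n) (m := 15) (by positivity) hb1
      (by exact_mod_cast hkval)
  have factorial_le : k.factorial ≤ n ^ 3 :=
    factorial_le_cube (pow_five_le_of_eq_mul_log_div_log hb hbn hb2 hkval hkeven) hbk
  obtain ⟨r, rfl⟩ := hkeven.exists_two_nsmul
  have hp0 : 0 ≤ p := hp ▸ by positivity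
  have hp1 : p ≤ 1 := hp ▸ Real.rpow_le_one_of_one_le_of_nonpos hb1.le (by norm_num)
  have p_pow_five : p ^ 5 = (b : ℝ)⁻¹ := by
    rw [hp, ← Real.rpow_mul_natCast (by positivity)]
    norm_num [Real.rpow_neg_one]
  have bp_le : b * p ≤ T.card * p := by gcongr
  have one_le_bp := one_le_mul_of_pow_five_eq_inv (by omega) hp0 p_pow_five
  refine (h.measureReal_deviation_le (p := ⟨p, hp0, hp1⟩) hX h01 T
    (one_le_bp.trans bp_le)).trans ?_
  rw [Real.rpow_neg (by positivity)]
  refine (two_mul_exp_mul_div_add_div_le (N := (n : ℝ) ^ 3) (by positivity) (by positivity)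
    (by exact_mod_cast factorial_le) ?_ (pow_eq_inv_cube hp0 p_pow_five hbk) ?_).trans_eq ?_
  · rw [← pow_mul, ← mul_pow_eq_pow_six hn hp0 p_pow_five hbk]
    gcongr
  · rw [Real.rpow_neg (by positivity)] at hε
    rw [← pow_mul]
    exact_mod_cast hε
  · norm_cast

theorem leader_events_concrete_parameters_general
    {Ω : Type*} [MeasureSpace Ω] [IsProbabilityMeasure (volume : Measure Ω)]
    (n b k : ℕ) (hb : (Real.logb 2 n) ^ 10 ≤ (b : ℝ)) (hbn : b ≤ n)
    (hkval : (k : ℝ) = 15 * Real.log n / Real.log b) (hkeven : Even k) (hk : k ≠ 0)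
    (ε p : ℝ) (hε : ε ≤ (n : ℝ) ^ (-6 : ℝ)) (hp : p = (b : ℝ) ^ (-(1 / 5) : ℝ))
    (X : Fin n → Ω → ℝ) (hmeas : ∀ i, Measurable (X i))
    (h01 : ∀ i ω, X i ω = 0 ∨ X i ω = 1) (happrox : KWiseApproxIndep n X k ε p) :
    (∀ T : Finset (Fin n), b ≤ T.card →
      1 - 9 * (n : ℝ) ^ (-3 : ℝ) ≤ (volume {ω | 0 < ∑ j ∈ T, X j ω}).toReal) ∧
    1 - 9 * (n : ℝ) ^ (-3 : ℝ) ≤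
      (volume {ω | ∑ i, X i ω ≤ 2 * (n : ℝ) * (b : ℝ) ^ (-(1 / 5) : ℝ)}).toReal := by
  have deviation_le :=
    happrox.measureReal_deviation_le_nine_mul hb hbn hkval hkeven hk hε hp hmeas h01
  refine ⟨fun T hT => one_sub_le_measureReal_sum_pos hmeas (deviation_le T hT), ?_⟩
  have total := one_sub_le_measureReal_sum_le hmeas
    (deviation_le Finset.univ (by simpa using hbn))
  rwa [Finset.card_univ, Fintype.card_fin, hp] at total

/-- With `(log₂ n)^{10} ≤ b ≤ n`, `k = 15·ln n / ln b` even, `ε = n^{−6}` and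
`p = b^{−1/5}`, each of the `n+1` events (every `S_i` is hit; at most `2·n·b^{−1/5}`
indices selected) holds with probability at least `1 − 9·n^{−3}`. -/
theorem leader_events_concrete_parameters
    {Ω : Type*} [MeasureSpace Ω] [IsProbabilityMeasure (volume : Measure Ω)]
    (n b k : ℕ) (hb : (Real.logb 2 n) ^ 10 ≤ (b : ℝ)) (hbn : b ≤ n)
    (hkval : (k : ℝ) = 15 * Real.log n / Real.log b) (hkeven : Even k) (hk4 : 4 ≤ k)
    (ε p : ℝ) (hε : ε = (n : ℝ) ^ (-6 : ℝ)) (hp : p = (b : ℝ) ^ (-(1/5) : ℝ))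
    (S : Fin n → Finset (Fin n)) (hScard : ∀ i, (S i).card = b) (hSmem : ∀ i, i ∈ S i)
    (X : Fin n → Ω → ℝ) (hmeas : ∀ i, Measurable (X i))
    (h01 : ∀ i ω, X i ω = 0 ∨ X i ω = 1)
    (hident : ∀ i j : Fin n, volume {ω | X i ω = 1} = volume {ω | X j ω = 1})
    (happrox : KWiseApproxIndep n X k ε p) :
    (∀ i : Fin n,
      1 - 9 * (n : ℝ) ^ (-3 : ℝ) ≤ (volume {ω | 0 < ∑ j ∈ S i, X j ω}).toReal) ∧
    1 - 9 * (n : ℝ) ^ (-3 : ℝ) ≤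
      (volume {ω | ∑ i, X i ω ≤ 2 * (n : ℝ) * (b : ℝ) ^ (-(1/5) : ℝ)}).toReal := by
  have events := leader_events_concrete_parameters_general n b k hb hbn hkval hkeven (by omega) ε p
    hε.le hp X hmeas h01 happrox
  exact ⟨fun i => events.1 (S i) (hScard i).ge, events.2⟩
end
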